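/- arXiv:1712.06403 — 3 statements merged into one kernel-verified Lean document; each statement's English description precedes it below -/
import Mathlib

section
/- For every even integer r ≥ 6 and every ε > 0, there exists N such that for all n ≥ N, the minimum number f_r(n) of complete r-partite r-graphs needed to partition the edge set of the complete r-uniform hypergraph on n vertices satisfies f_r(n) ≤ (14/15)^(r/6) · (1 + ε) · C(n, r/2), where C(n, k) denotes the binomial coefficient. -/
/-- A complete `r`-partite `r`-graph (a "block") on a finite vertex set `V ⊆ ℕ`:
it is determined by `r` pairwise disjoint nonempty subsets of `V`. -/
structure Block (V : Finset ℕ) (r : ℕ) where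
  parts : Fin r → Finset ℕ
  nonempty : ∀ i, (parts i).Nonempty
  subset : ∀ i, parts i ⊆ V
  disj : ∀ i j, i ≠ j → Disjoint (parts i) (parts j)

/-- The edge set of a block: all sets contained in the union of the parts
meeting each part in exactly one vertex. -/
def Block.edges {V : Finset ℕ} {r : ℕ} (B : Block V r) : Set (Finset ℕ) :=
  {X | (∀ i, (X ∩ B.parts i).card = 1) ∧ ∀ x ∈ X, ∃ i, x ∈ B.parts i}

/-- `ExactCover V r k F` : there are `k` complete `r`-partite `r`-graphs on `V`
whose edge sets are pairwise disjoint and whose union is the family `F`. -/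
def ExactCover (V : Finset ℕ) (r k : ℕ) (F : Set (Finset ℕ)) : Prop :=
  ∃ B : Fin k → Block V r,
    (∀ i j, i ≠ j → Disjoint (B i).edges (B j).edges) ∧
    (⋃ i, (B i).edges) = F

/-- `f r n` : the minimum number of complete `r`-partite `r`-graphs needed to
partition the edge set of the complete `r`-uniform hypergraph on `[n]`. -/
noncomputable def f (r n : ℕ) : ℕ :=
  sInf {k | ExactCover (Finset.range n) r k
    {X | X ⊆ Finset.range n ∧ X.card = r}}

/-- The family `F` splits into the edge sets of at most `k` complete `r`-partite `r`-graphs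
on `V`. -/
def HasBlockPartition (V : Finset ℕ) (r k : ℕ) (F : Set (Finset ℕ)) : Prop :=
  ∃ (ι : Type) (_ : Fintype ι) (B : ι → Block V r), Fintype.card ι ≤ k ∧
    (∀ X, X ∈ F ↔ ∃ i, X ∈ (B i).edges) ∧
    ∀ X i j, X ∈ (B i).edges → X ∈ (B j).edges → i = j

theorem Block.subset_of_mem_edges {V : Finset ℕ} {r : ℕ} (B : Block V r) {X : Finset ℕ}
    (hX : X ∈ B.edges) : X ⊆ V := fun x hx =>
  let ⟨i, hi⟩ := hX.2 x hx
  B.subset i hi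

theorem f_le_of_hasBlockPartition {r n k : ℕ}
    (h : HasBlockPartition (Finset.range n) r k {X | X ⊆ Finset.range n ∧ X.card = r}) :
    f r n ≤ k := by
  obtain ⟨ι, _, B, hk, hF, hB⟩ := h
  refine le_trans (Nat.sInf_le ⟨fun i => B ((Fintype.equivFin ι).symm i), ?_, ?_⟩) hk
  · intro i j hij
    rw [Set.disjoint_left]
    intro X hi hj
    exact hij ((Fintype.equivFin ι).symm.injective (hB X _ _ hi hj))
  · ext X
    rw [hF, Set.mem_iUnion]
    exact ((Fintype.equivFin ι).symm.surjective.exists (p := fun i => X ∈ (B i).edges)).symm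

namespace HasBlockPartition

theorem mono {V V' : Finset ℕ} {r k k' : ℕ} {F : Set (Finset ℕ)}
    (h : HasBlockPartition V r k F) (hV : V ⊆ V') (hk : k ≤ k') :
    HasBlockPartition V' r k' F := by
  obtain ⟨ι, _, B, hB⟩ := h
  exact ⟨ι, inferInstance, fun i => ⟨(B i).parts, (B i).nonempty,
    fun j => ((B i).subset j).trans hV, (B i).disj⟩, hB.1.trans hk, hB.2⟩

theorem subset {V : Finset ℕ} {r k : ℕ} {F : Set (Finset ℕ)}
    (h : HasBlockPartition V r k F) {X : Finset ℕ} (hX : X ∈ F) : X ⊆ V := by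
  obtain ⟨ι, _, B, -, hF, -⟩ := h
  obtain ⟨i, hi⟩ := (hF X).1 hX
  exact (B i).subset_of_mem_edges hi

theorem of_parts {V : Finset ℕ} {r : ℕ} (P : Fin r → Finset ℕ) (hV : ∀ i, P i ⊆ V)
    (hP : ∀ i j, i ≠ j → Disjoint (P i) (P j)) :
    HasBlockPartition V r 1
      {X | (∀ i, (X ∩ P i).card = 1) ∧ ∀ x ∈ X, ∃ i, x ∈ P i} := by
  by_cases hne : ∀ i, (P i).Nonempty
  · exact ⟨Unit, inferInstance, fun _ => ⟨P, hne, hV, hP⟩, by simp, fun X => by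
      simp [Block.edges], fun _ _ _ _ _ => rfl⟩
  · push Not at hne
    obtain ⟨i, hi⟩ := hne
    refine ⟨Empty, inferInstance, Empty.elim, by simp, fun X => ?_, fun _ i => i.elim⟩
    simp only [Set.mem_ofPred_eq, IsEmpty.exists_iff, iff_false, not_and]
    intro h
    simpa [hi] using h i

theorem biUnion {V : Finset ℕ} {r : ℕ} {κ : Type} (s : Finset κ) {F : Set (Finset ℕ)}
    (G : κ → Set (Finset ℕ)) (c : κ → ℕ) (hG : ∀ i ∈ s, HasBlockPartition V r (c i) (G i))
    (hF : ∀ X, X ∈ F ↔ ∃ i ∈ s, X ∈ G i)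
    (hdisj : ∀ X, ∀ i ∈ s, ∀ j ∈ s, X ∈ G i → X ∈ G j → i = j) :
    HasBlockPartition V r (∑ i ∈ s, c i) F := by
  have hG' : ∀ i : s, HasBlockPartition V r (c i) (G i) := fun i => hG i i.2
  choose ι hι B hc hmem huniq using hG'
  refine ⟨Σ i : s, ι i, inferInstance, fun p => B p.1 p.2, ?_, fun X => ?_, ?_⟩
  · rw [Fintype.card_sigma, ← Finset.sum_coe_sort s c]
    exact Finset.sum_le_sum fun i _ => hc i
  · rw [hF]
    constructor
    · rintro ⟨i, hi, hX⟩
      obtain ⟨j, hj⟩ := (hmem ⟨i, hi⟩ X).1 hX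
      exact ⟨⟨⟨i, hi⟩, j⟩, hj⟩
    · rintro ⟨⟨i, j⟩, hj⟩
      exact ⟨i, i.2, (hmem i X).2 ⟨j, hj⟩⟩
  · rintro X ⟨i, a⟩ ⟨j, b⟩ ha hb
    obtain rfl : i = j := Subtype.ext <|
      hdisj X i i.2 j j.2 ((hmem i X).2 ⟨a, ha⟩) ((hmem j X).2 ⟨b, hb⟩)
    rw [huniq i X a b ha hb]

end HasBlockPartition

/-- The join of two blocks on disjoint vertex sets. -/
def Block.join {A B : Finset ℕ} {r s : ℕ} (hAB : Disjoint A B) (P : Block A r)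
    (Q : Block B s) : Block (A ∪ B) (r + s) where
  parts := Fin.append P.parts Q.parts
  nonempty i := by
    refine Fin.addCases (fun i => ?_) (fun i => ?_) i
    · simpa using P.nonempty i
    · simpa using Q.nonempty i
  subset i := by
    refine Fin.addCases (fun i => ?_) (fun i => ?_) i
    · simpa using (P.subset i).trans Finset.subset_union_left
    · simpa using (Q.subset i).trans Finset.subset_union_right
  disj i j := by
    refine Fin.addCases (fun i => ?_) (fun i => ?_) i <;>
      refine Fin.addCases (fun j => ?_) (fun j => ?_) j <;> intro hij
    · simpa using P.disj i j (fun h => hij (by rw [h]))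
    · simpa using Finset.disjoint_of_subset_left (P.subset i)
        (Finset.disjoint_of_subset_right (Q.subset j) hAB)
    · simpa using Finset.disjoint_of_subset_left (Q.subset i)
        (Finset.disjoint_of_subset_right (P.subset j) hAB.symm)
    · simpa using Q.disj i j (fun h => hij (by rw [h]))

theorem Block.mem_edges_join {A B : Finset ℕ} {r s : ℕ} (hAB : Disjoint A B) (P : Block A r)
    (Q : Block B s) (X : Finset ℕ) :
    X ∈ (P.join hAB Q).edges ↔ X ⊆ A ∪ B ∧ X ∩ A ∈ P.edges ∧ X ∩ B ∈ Q.edges := by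
  have hA : ∀ i, X ∩ A ∩ P.parts i = X ∩ P.parts i := fun i => by
    rw [Finset.inter_assoc, Finset.inter_eq_right.2 (P.subset i)]
  have hB : ∀ i, X ∩ B ∩ Q.parts i = X ∩ Q.parts i := fun i => by
    rw [Finset.inter_assoc, Finset.inter_eq_right.2 (Q.subset i)]
  have hsplit : ∀ x, (∃ i, x ∈ (P.join hAB Q).parts i) ↔
      (∃ i, x ∈ P.parts i) ∨ ∃ i, x ∈ Q.parts i := by
    intro x
    constructor
    · rintro ⟨i, hi⟩
      revert hi
      refine Fin.addCases (fun i => ?_) (fun i => ?_) i <;> intro hi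
      · exact Or.inl ⟨i, by simpa [Block.join] using hi⟩
      · exact Or.inr ⟨i, by simpa [Block.join] using hi⟩
    · rintro (⟨i, hi⟩ | ⟨i, hi⟩)
      · exact ⟨Fin.castAdd s i, by simpa [Block.join] using hi⟩
      · exact ⟨Fin.natAdd r i, by simpa [Block.join] using hi⟩
  constructor
  · intro h
    refine ⟨Block.subset_of_mem_edges _ h, ⟨fun i => ?_, fun x hx => ?_⟩,
      ⟨fun i => ?_, fun x hx => ?_⟩⟩
    · rw [hA]
      simpa [Block.join] using h.1 (Fin.castAdd s i)
    · rw [Finset.mem_inter] at hx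
      refine ((hsplit x).1 (h.2 x hx.1)).resolve_right ?_
      rintro ⟨i, hi⟩
      exact Finset.disjoint_left.1 hAB hx.2 (Q.subset i hi)
    · rw [hB]
      simpa [Block.join] using h.1 (Fin.natAdd r i)
    · rw [Finset.mem_inter] at hx
      refine ((hsplit x).1 (h.2 x hx.1)).resolve_left ?_
      rintro ⟨i, hi⟩
      exact Finset.disjoint_left.1 hAB (P.subset i hi) hx.2
  · rintro ⟨hX, hXA, hXB⟩
    refine ⟨fun i => ?_, fun x hx => (hsplit x).2 ?_⟩
    · refine Fin.addCases (fun i => ?_) (fun i => ?_) i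
      · simpa [Block.join, hA] using hXA.1 i
      · simpa [Block.join, hB] using hXB.1 i
    · rcases Finset.mem_union.1 (hX hx) with h | h
      · exact Or.inl (hXA.2 x (Finset.mem_inter.2 ⟨hx, h⟩))
      · exact Or.inr (hXB.2 x (Finset.mem_inter.2 ⟨hx, h⟩))

namespace HasBlockPartition

theorem join {A B : Finset ℕ} {r s a b : ℕ} {F G : Set (Finset ℕ)} (hAB : Disjoint A B)
    (hF : HasBlockPartition A r a F) (hG : HasBlockPartition B s b G) :
    HasBlockPartition (A ∪ B) (r + s) (a * b)
      {X | X ⊆ A ∪ B ∧ X ∩ A ∈ F ∧ X ∩ B ∈ G} := by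
  obtain ⟨ι, _, P, ha, hF, hP⟩ := hF
  obtain ⟨κ, _, Q, hb, hG, hQ⟩ := hG
  refine ⟨ι × κ, inferInstance, fun p => (P p.1).join hAB (Q p.2), ?_, fun X => ?_, ?_⟩
  · rw [Fintype.card_prod]
    exact Nat.mul_le_mul ha hb
  · simp only [Set.mem_ofPred_eq, Block.mem_edges_join, hF, hG, Prod.exists]
    tauto
  · rintro X ⟨i, j⟩ ⟨i', j'⟩ h h'
    rw [Block.mem_edges_join] at h h'
    exact Prod.ext (hP _ _ _ h.2.1 h'.2.1) (hQ _ _ _ h.2.2 h'.2.2)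

theorem finset_join {κ : Type} [DecidableEq κ] (s : Finset κ) (I : κ → Finset ℕ)
    (hI : ∀ i j, i ≠ j → Disjoint (I i) (I j)) (a c : κ → ℕ) (F : κ → Set (Finset ℕ))
    (hF : ∀ i ∈ s, HasBlockPartition (I i) (a i) (c i) (F i)) :
    HasBlockPartition (s.biUnion I) (∑ i ∈ s, a i) (∏ i ∈ s, c i)
      {X | X ⊆ s.biUnion I ∧ ∀ i ∈ s, X ∩ I i ∈ F i} := by
  induction s using Finset.induction_on with
  | empty =>
    simp only [Finset.biUnion_empty, Finset.sum_empty, Finset.prod_empty]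
    convert of_parts (V := ∅) (r := 0) (fun _ => ∅) (by simp) (by simp) using 1
    ext X
    simp [Finset.eq_empty_iff_forall_notMem, Finset.subset_empty]
  | insert i s hi ih =>
    have hdisj : Disjoint (I i) (s.biUnion I) := by
      rw [Finset.disjoint_biUnion_right]
      exact fun j hj => hI i j (fun h => hi (h ▸ hj))
    rw [Finset.biUnion_insert, Finset.sum_insert hi, Finset.prod_insert hi]
    convert join hdisj (hF i (by simp)) (ih fun j hj => hF j (by simp [hj])) using 1
    ext X
    have : ∀ j ∈ s, X ∩ s.biUnion I ∩ I j = X ∩ I j := fun j hj => by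
      rw [Finset.inter_assoc, Finset.inter_eq_right.2 (Finset.subset_biUnion_of_mem I hj)]
    simp only [Set.mem_ofPred_eq, Finset.forall_mem_insert, Finset.inter_subset_right, true_and]
    refine and_congr_right fun _ => and_congr_right fun _ => forall₂_congr fun j hj => ?_
    rw [this j hj]

theorem singletons (V : Finset ℕ) : HasBlockPartition V 1 1 {X | X ⊆ V ∧ X.card = 1} := by
  convert of_parts (V := V) (r := 1) (fun _ => V) (by simp)
    (fun i j h => absurd (Subsingleton.elim i j) h) using 1
  ext X
  simp only [Set.mem_ofPred_eq, forall_const, exists_const]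
  constructor
  · rintro ⟨h, hc⟩
    exact ⟨by rwa [Finset.inter_eq_left.2 h], h⟩
  · rintro ⟨hc, h⟩
    have h : X ⊆ V := h
    exact ⟨h, by rwa [Finset.inter_eq_left.2 h] at hc⟩

theorem biclique {V P Q : Finset ℕ} (hP : P ⊆ V) (hQ : Q ⊆ V) (hPQ : Disjoint P Q) :
    HasBlockPartition V 2 1 {X | ∃ x ∈ P, ∃ y ∈ Q, X = {x, y}} := by
  convert of_parts (V := V) (r := 2) ![P, Q] (by simp [Fin.forall_fin_two, hP, hQ])
    (by simp [Fin.forall_fin_two, hPQ, hPQ.symm]) using 1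
  ext X
  simp only [Set.mem_ofPred_eq, Fin.forall_fin_two, Fin.exists_fin_two, Matrix.cons_val_zero,
    Matrix.cons_val_one, Finset.card_eq_one]
  rw [Finset.disjoint_left] at hPQ
  constructor
  · rintro ⟨x, hx, y, hy, rfl⟩
    refine ⟨⟨⟨x, ?_⟩, ⟨y, ?_⟩⟩, by simp [hx, hy]⟩
    · ext z
      simp only [Finset.mem_inter, Finset.mem_insert, Finset.mem_singleton]
      grind
    · ext z
      simp only [Finset.mem_inter, Finset.mem_insert, Finset.mem_singleton]
      grind
  · rintro ⟨⟨⟨x, hx⟩, ⟨y, hy⟩⟩, h⟩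
    simp only [Finset.ext_iff, Finset.mem_inter, Finset.mem_singleton] at hx hy
    refine ⟨x, ((hx x).2 rfl).2, y, ((hy y).2 rfl).2, ?_⟩
    ext z
    simp only [Finset.mem_insert, Finset.mem_singleton]
    grind

end HasBlockPartition

/-- A set with at least two elements has a unique second smallest one. -/
theorem existsUnique_card_filter_lt_eq_one {X : Finset ℕ} (hX : 2 ≤ X.card) :
    ∃! x, x ∈ X ∧ (X.filter (· < x)).card = 1 := by
  have hne : X.Nonempty := Finset.card_pos.1 (by omega)
  set a := X.min' hne with ha
  have haX : a ∈ X := Finset.min'_mem _ _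
  have hmin : ∀ x ∈ X, a ≤ x := fun x hx => Finset.min'_le _ _ hx
  have hne' : (X.erase a).Nonempty := Finset.card_pos.1 (by
    rw [Finset.card_erase_of_mem haX]; omega)
  set b := (X.erase a).min' hne' with hb
  have hbX : b ∈ X.erase a := Finset.min'_mem _ _
  have hminb : ∀ x ∈ X, x ≠ a → b ≤ x := fun x hx hxa =>
    Finset.min'_le _ _ (Finset.mem_erase.2 ⟨hxa, hx⟩)
  clear_value a b
  rw [Finset.mem_erase] at hbX
  refine ⟨b, ⟨hbX.2, Finset.card_eq_one.2 ⟨a, ?_⟩⟩, ?_⟩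
  · ext x
    simp only [Finset.mem_filter, Finset.mem_singleton]
    grind
  · rintro y ⟨hy, hc⟩
    obtain ⟨z, hz⟩ := Finset.card_eq_one.1 hc
    simp only [Finset.ext_iff, Finset.mem_filter, Finset.mem_singleton] at hz
    have h1 := hz a
    have h2 := hz b
    have h3 := hz z
    grind

namespace HasBlockPartition

theorem powersetCard_zero (V : Finset ℕ) :
    HasBlockPartition V 0 1 {X | X ⊆ V ∧ X.card = 0} := by
  convert of_parts (V := V) (r := 0) (fun _ => ∅) (by simp) (by simp) using 1
  ext X
  simp only [Set.mem_ofPred_eq, Finset.card_eq_zero, IsEmpty.forall_iff, IsEmpty.exists_iff,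
    true_and]
  constructor
  · rintro ⟨-, rfl⟩
    simp
  · intro h
    obtain rfl : X = ∅ := Finset.eq_empty_of_forall_notMem h
    simp

theorem powersetCard (V : Finset ℕ) (r : ℕ) :
    HasBlockPartition V r (V.card ^ (r / 2)) {X | X ⊆ V ∧ X.card = r} := by
  induction r using Nat.twoStepInduction generalizing V with
  | zero => simpa using powersetCard_zero V
  | one => simpa using singletons V
  | more r ih _ =>
    have key : ∀ x ∈ V, HasBlockPartition V (r + 2) (V.card ^ (r / 2))
        {X | X ⊆ V ∧ X.card = r + 2 ∧ x ∈ X ∧ (X.filter (· < x)).card = 1} := by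
      intro x hx
      have h1 : Disjoint (V.filter (· < x)) {x} := by simp
      have h2 : Disjoint (V.filter (· < x) ∪ {x}) (V.filter (x < ·)) := by
        rw [Finset.disjoint_left]
        grind
      have hV : V.filter (· < x) ∪ {x} ∪ V.filter (x < ·) = V := by
        ext y
        grind
      have h := ((singletons (V.filter (· < x))).join h1 (singletons {x})).join h2
        (ih (V.filter (x < ·)))
      rw [hV, show 1 + 1 + r = r + 2 by ring] at h
      convert h.mono subset_rfl (k' := V.card ^ (r / 2)) ?_ using 1
      · ext X
        simp only [Set.mem_ofPred_eq, Finset.inter_subset_right, true_and]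
        refine and_congr_right fun hXV => ?_
        have e1 : X ∩ (V.filter (· < x) ∪ {x}) ∩ V.filter (· < x) = X.filter (· < x) := by
          ext y; have := @hXV y; grind
        have e2 : X ∩ (V.filter (· < x) ∪ {x}) ∩ {x} = X ∩ {x} := by
          ext y; grind
        have e3 : X ∩ V.filter (x < ·) = X.filter (x < ·) := by
          ext y; have := @hXV y; grind
        have e5 : (X ∩ {x}).card = 1 ↔ x ∈ X := by
          by_cases hxX : x ∈ X <;> simp [hxX]
        have e6 : X.card = (X.filter (· < x)).card + (X ∩ {x}).card
            + (X.filter (x < ·)).card := by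
          rw [← Finset.card_union_of_disjoint, ← Finset.card_union_of_disjoint]
          · congr 1
            ext y; grind
          · rw [Finset.disjoint_left]; grind
          · rw [Finset.disjoint_left]; grind
        rw [e1, e2, e3, e5]
        constructor
        · rintro ⟨hc, hxX, h1⟩
          have := e5.2 hxX
          exact ⟨⟨h1, hxX⟩, by omega⟩
        · rintro ⟨⟨h1, hxX⟩, hc⟩
          have := e5.2 hxX
          exact ⟨by omega, hxX, h1⟩
      · rw [one_mul, one_mul]
        exact Nat.pow_le_pow_left (Finset.card_filter_le _ _) _
    have h := biUnion V (F := {X | X ⊆ V ∧ X.card = r + 2}) _ _ key ?_ ?_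
    · convert h using 1
      rw [Finset.sum_const, smul_eq_mul, show (r + 2) / 2 = r / 2 + 1 by omega, pow_succ']
    · intro X
      simp only [Set.mem_ofPred_eq]
      constructor
      · rintro ⟨hX, hc⟩
        obtain ⟨x, hx, -⟩ := existsUnique_card_filter_lt_eq_one (X := X) (by omega)
        exact ⟨x, hX hx.1, hX, hc, hx⟩
      · rintro ⟨x, -, hX, hc, -⟩
        exact ⟨hX, hc⟩
    · rintro X x - y - ⟨-, hc, hx⟩ ⟨-, -, hy⟩
      exact (existsUnique_card_filter_lt_eq_one (by omega)).unique hx hy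

end HasBlockPartition

/-- Fourteen pairs of bicliques, given by the labels of their sides, whose products partition
`E(K₄) × E(K₆)`. -/
def productBicliques :
    Fin 14 → (Finset ℕ × Finset ℕ) × (Finset ℕ × Finset ℕ) :=
  ![(({0, 1}, {2, 3}), ({1}, {2, 3})),
    (({0, 1}, {2, 3}), ({0}, {1, 2, 4})),
    (({0, 2}, {1, 3}), ({1, 3}, {5})),
    (({0, 2}, {1, 3}), ({1, 2}, {4})),
    (({0, 3}, {1, 2}), ({0, 4}, {5})),
    (({0, 3}, {1, 2}), ({0, 2}, {3})),
    (({0}, {1}), ({0, 1, 5}, {2})),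
    (({0}, {1}), ({0, 3}, {1, 4})),
    (({2}, {3}), ({0, 1, 5}, {2})),
    (({2}, {3}), ({0, 3}, {1, 4})),
    (({0}, {2}), ({1, 2, 3}, {4, 5})),
    (({1}, {3}), ({1, 2, 3}, {4, 5})),
    (({0}, {3}), ({0, 2, 4}, {3, 5})),
    (({1}, {2}), ({0, 2, 4}, {3, 5}))]

/-- The labels `u` and `v` lie on opposite sides of the biclique `p`. -/
def Separates (p : Finset ℕ × Finset ℕ) (u v : ℕ) : Prop :=
  u ∈ p.1 ∧ v ∈ p.2 ∨ v ∈ p.1 ∧ u ∈ p.2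

instance (p : Finset ℕ × Finset ℕ) (u v : ℕ) : Decidable (Separates p u v) :=
  inferInstanceAs (Decidable (_ ∨ _))

theorem productBicliques_disjoint (t : Fin 14) :
    Disjoint (productBicliques t).1.1 (productBicliques t).1.2 ∧
      Disjoint (productBicliques t).2.1 (productBicliques t).2.2 := by
  revert t
  decide

theorem productBicliques_lt (t : Fin 14) :
    (∀ u ∈ (productBicliques t).1.1 ∪ (productBicliques t).1.2, u < 4) ∧
      ∀ u ∈ (productBicliques t).2.1 ∪ (productBicliques t).2.2, u < 6 := by
  revert t
  decide

theorem productBicliques_exists : ∀ u v : Fin 4, ∀ s w : Fin 6, u ≠ v → s ≠ w → ∃ t,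
     Separates (productBicliques t).1 u v ∧ Separates (productBicliques t).2 s w := by
  decide +kernel

theorem productBicliques_unique : ∀ t t', t ≠ t' →
    (∀ u < 4, ∀ v < 4, ¬(Separates (productBicliques t).1 u v ∧
      Separates (productBicliques t').1 u v)) ∨
    ∀ u < 6, ∀ v < 6, ¬(Separates (productBicliques t).2 u v ∧
      Separates (productBicliques t').2 u v) := by
  decide +kernel

theorem pair_eq_pair {x y a b : ℕ} (h : ({x, y} : Finset ℕ) = {a, b}) :
    x = a ∧ y = b ∨ x = b ∧ y = a := by
  rwa [← Finset.coe_inj, Finset.coe_pair, Finset.coe_pair, Set.pair_eq_pair_iff] at h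

/-- The pairs in `A` whose elements carry distinct labels below `p`: the edges of a blow-up of
the complete graph on `p` vertices. -/
def crossingPairs (A : Finset ℕ) (l : ℕ → ℕ) (p : ℕ) : Set (Finset ℕ) :=
  {X | ∃ x ∈ A, ∃ y ∈ A, l x < p ∧ l y < p ∧ l x ≠ l y ∧ X = {x, y}}

/-- The pairs in `A` whose elements carry labels on opposite sides of the biclique `p`. -/
def bicliquePairs (A : Finset ℕ) (l : ℕ → ℕ) (p : Finset ℕ × Finset ℕ) : Set (Finset ℕ) :=
  {X | ∃ x ∈ A.filter (l · ∈ p.1), ∃ y ∈ A.filter (l · ∈ p.2), X = {x, y}}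

theorem mem_bicliquePairs_iff {A : Finset ℕ} {l : ℕ → ℕ} {p : Finset ℕ × Finset ℕ} {x y : ℕ}
    (hx : x ∈ A) (hy : y ∈ A) : {x, y} ∈ bicliquePairs A l p ↔ Separates p (l x) (l y) := by
  constructor
  · rintro ⟨a, ha, b, hb, h⟩
    rw [Finset.mem_filter] at ha hb
    rcases pair_eq_pair h with ⟨rfl, rfl⟩ | ⟨rfl, rfl⟩
    · exact Or.inl ⟨ha.2, hb.2⟩
    · exact Or.inr ⟨ha.2, hb.2⟩
  · rintro (⟨h1, h2⟩ | ⟨h1, h2⟩)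
    · exact ⟨x, by simp [*], y, by simp [*], rfl⟩
    · exact ⟨y, by simp [*], x, by simp [*], Finset.pair_comm _ _⟩

theorem bicliquePairs_subset_crossingPairs {A : Finset ℕ} {l : ℕ → ℕ}
    {p : Finset ℕ × Finset ℕ} {k : ℕ} (hp : Disjoint p.1 p.2) (hk : ∀ u ∈ p.1 ∪ p.2, u < k) :
    bicliquePairs A l p ⊆ crossingPairs A l k := by
  rintro X ⟨x, hx, y, hy, rfl⟩
  rw [Finset.mem_filter] at hx hy
  exact ⟨x, hx.1, y, hy.1, hk _ (Finset.mem_union_left _ hx.2),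
    hk _ (Finset.mem_union_right _ hy.2),
    fun h => Finset.disjoint_left.1 hp hx.2 (h ▸ hy.2), rfl⟩

/-- The label of a vertex of rank `n` in the `j`-th blow-up of the complete graph on `p + 1`
vertices, when all pairs are split into such blow-ups. -/
def chainLabel (p j n : ℕ) : ℕ :=
  if n < j * p then p + 1 else min (n - j * p) p

theorem chainLabel_crossing_iff {p j a b : ℕ} (hab : a < b) :
    (chainLabel p j a < p + 1 ∧ chainLabel p j b < p + 1 ∧
      chainLabel p j a ≠ chainLabel p j b) ↔ j * p ≤ a ∧ a < (j + 1) * p := by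
  rw [add_one_mul]
  unfold chainLabel
  split_ifs <;> omega

theorem chainLabel_existsUnique {p a b n : ℕ} (hp : 0 < p) (hab : a ≠ b) (ha : a < n)
    (hb : b < n) : ∃! j, j ∈ Finset.range (n / p + 1) ∧ chainLabel p j a < p + 1 ∧
      chainLabel p j b < p + 1 ∧ chainLabel p j a ≠ chainLabel p j b := by
  wlog h : a < b generalizing a b
  · obtain ⟨j, hj, huniq⟩ := this hab.symm hb ha (by omega)
    exact ⟨j, ⟨hj.1, hj.2.2.1, hj.2.1, hj.2.2.2.symm⟩,
      fun k hk => huniq k ⟨hk.1, hk.2.2.1, hk.2.1, hk.2.2.2.symm⟩⟩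
  · simp only [chainLabel_crossing_iff h]
    refine ⟨a / p, ⟨?_, Nat.div_mul_le_self a p, ?_⟩, ?_⟩
    · rw [Finset.mem_range, Nat.lt_succ_iff]
      exact Nat.div_le_div_right ha.le
    · rw [mul_comm]
      exact Nat.lt_mul_div_succ a hp
    · rintro j ⟨-, h1, h2⟩
      exact (Nat.div_eq_of_lt_le h1 h2).symm

/-- The labelling of the `j`-th blow-up in the splitting of all pairs in `A`. -/
def rankLabel (A : Finset ℕ) (p j x : ℕ) : ℕ :=
  chainLabel p j (A.filter (· < x)).card

theorem rankLabel_existsUnique {A X : Finset ℕ} {p : ℕ} (hp : 0 < p) (hXA : X ⊆ A)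
    (hX : X.card = 2) : ∃! j, j ∈ Finset.range (A.card / p + 1) ∧
      X ∈ crossingPairs A (rankLabel A p j) (p + 1) := by
  obtain ⟨x, y, hxy, rfl⟩ := Finset.card_eq_two.1 hX
  have hx : x ∈ A := hXA (by simp)
  have hy : y ∈ A := hXA (by simp)
  have hlt : ∀ a ∈ A, (A.filter (· < a)).card < A.card := fun a ha =>
    Finset.card_lt_card (Finset.filter_ssubset.2 ⟨a, ha, lt_irrefl a⟩)
  have hmono : ∀ a ∈ A, ∀ b, a < b → (A.filter (· < a)).card < (A.filter (· < b)).card := by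
    intro a ha b hab
    apply Finset.card_lt_card
    rw [Finset.ssubset_iff_of_subset (fun z => by grind)]
    exact ⟨a, by simp [ha, hab], by simp⟩
  have hne : (A.filter (· < x)).card ≠ (A.filter (· < y)).card := by
    rcases lt_or_gt_of_ne hxy with h | h
    · exact (hmono x hx y h).ne
    · exact (hmono y hy x h).ne'
  have hiff : ∀ j, {x, y} ∈ crossingPairs A (rankLabel A p j) (p + 1) ↔
      rankLabel A p j x < p + 1 ∧ rankLabel A p j y < p + 1 ∧
        rankLabel A p j x ≠ rankLabel A p j y := by
    intro j
    constructor
    · rintro ⟨a, -, b, -, h1, h2, h3, h⟩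
      rcases pair_eq_pair h with ⟨rfl, rfl⟩ | ⟨rfl, rfl⟩
      · exact ⟨h1, h2, h3⟩
      · exact ⟨h2, h1, h3.symm⟩
    · rintro ⟨h1, h2, h3⟩
      exact ⟨x, hx, y, hy, h1, h2, h3, rfl⟩
  simp only [hiff]
  exact chainLabel_existsUnique hp hne (hlt x hx) (hlt y hy)

theorem crossingPairs_subset {A X : Finset ℕ} {l : ℕ → ℕ} {p : ℕ}
    (h : X ∈ crossingPairs A l p) : X ⊆ A ∧ X.card = 2 := by
  obtain ⟨x, hx, y, hy, -, -, hne, rfl⟩ := h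
  refine ⟨by simp [Finset.insert_subset_iff, hx, hy], Finset.card_pair ?_⟩
  rintro rfl
  exact hne rfl

namespace HasBlockPartition

theorem crossingPairs_join {A B : Finset ℕ} (hAB : Disjoint A B) (l m : ℕ → ℕ) :
    HasBlockPartition (A ∪ B) 4 14
      {X | X ⊆ A ∪ B ∧ X ∩ A ∈ crossingPairs A l 4 ∧ X ∩ B ∈ crossingPairs B m 6} := by
  have hbi : ∀ (V : Finset ℕ) (l : ℕ → ℕ) (p : Finset ℕ × Finset ℕ), Disjoint p.1 p.2 →
      HasBlockPartition V 2 1 (bicliquePairs V l p) := by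
    intro V l p hp
    refine biclique (Finset.filter_subset _ _) (Finset.filter_subset _ _) ?_
    rw [Finset.disjoint_left] at hp ⊢
    grind
  have h := biUnion Finset.univ (fun t : Fin 14 => {X | X ⊆ A ∪ B ∧
      X ∩ A ∈ bicliquePairs A l (productBicliques t).1 ∧
      X ∩ B ∈ bicliquePairs B m (productBicliques t).2}) (fun _ => 1)
    (F := {X | X ⊆ A ∪ B ∧ X ∩ A ∈ crossingPairs A l 4 ∧ X ∩ B ∈ crossingPairs B m 6})
    (fun t _ => (hbi A l _ (productBicliques_disjoint t).1).join hAB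
      (hbi B m _ (productBicliques_disjoint t).2)) ?_ ?_
  · simpa using h
  · intro X
    simp only [Set.mem_ofPred_eq, Finset.mem_univ, true_and]
    constructor
    · rintro ⟨hX, ⟨x, hx, y, hy, hx4, hy4, hxy, hXA⟩, z, hz, w, hw, hz6, hw6, hzw, hXB⟩
      obtain ⟨t, h1, h2⟩ := productBicliques_exists ⟨_, hx4⟩ ⟨_, hy4⟩ ⟨_, hz6⟩ ⟨_, hw6⟩
        (by simpa using hxy) (by simpa using hzw)
      exact ⟨t, hX, hXA ▸ (mem_bicliquePairs_iff hx hy).2 h1,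
        hXB ▸ (mem_bicliquePairs_iff hz hw).2 h2⟩
    · rintro ⟨t, hX, h1, h2⟩
      exact ⟨hX,
        bicliquePairs_subset_crossingPairs (productBicliques_disjoint t).1
          (productBicliques_lt t).1 h1,
        bicliquePairs_subset_crossingPairs (productBicliques_disjoint t).2
          (productBicliques_lt t).2 h2⟩
  · rintro X t - t' - ⟨-, hA, hB⟩ ⟨-, hA', hB'⟩
    by_contra hne
    rcases productBicliques_unique t t' hne with h | h
    · obtain ⟨x, hx, y, hy, hx4, hy4, -, hXA⟩ := bicliquePairs_subset_crossingPairs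
        (productBicliques_disjoint t).1 (productBicliques_lt t).1 hA
      rw [hXA, mem_bicliquePairs_iff hx hy] at hA hA'
      exact h _ hx4 _ hy4 ⟨hA, hA'⟩
    · obtain ⟨x, hx, y, hy, hx4, hy4, -, hXB⟩ := bicliquePairs_subset_crossingPairs
        (productBicliques_disjoint t).2 (productBicliques_lt t).2 hB
      rw [hXB, mem_bicliquePairs_iff hx hy] at hB hB'
      exact h _ hx4 _ hy4 ⟨hB, hB'⟩

theorem pairs_join {A B : Finset ℕ} (hAB : Disjoint A B) :
    HasBlockPartition (A ∪ B) 4 (14 * ((A.card / 3 + 1) * (B.card / 5 + 1)))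
      {X | X ⊆ A ∪ B ∧ (X ∩ A).card = 2 ∧ (X ∩ B).card = 2} := by
  have h := biUnion
    (Finset.range (A.card / 3 + 1) ×ˢ Finset.range (B.card / 5 + 1))
    (fun t => {X | X ⊆ A ∪ B ∧
      X ∩ A ∈ crossingPairs A (rankLabel A 3 t.1) 4 ∧
      X ∩ B ∈ crossingPairs B (rankLabel B 5 t.2) 6}) (fun _ => 14)
    (F := {X | X ⊆ A ∪ B ∧ (X ∩ A).card = 2 ∧ (X ∩ B).card = 2})
    (fun t _ => crossingPairs_join hAB _ _) ?_ ?_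
  · convert h using 1
    simp [mul_comm]
  · intro X
    simp only [Set.mem_ofPred_eq, Prod.exists, Finset.mem_product]
    constructor
    · rintro ⟨hX, h1, h2⟩
      obtain ⟨i, hi, -⟩ := rankLabel_existsUnique (p := 3) (by simp)
        (Finset.inter_subset_right (s₁ := X) (s₂ := A)) h1
      obtain ⟨j, hj, -⟩ := rankLabel_existsUnique (p := 5) (by simp)
        (Finset.inter_subset_right (s₁ := X) (s₂ := B)) h2
      exact ⟨i, j, ⟨hi.1, hj.1⟩, hX, hi.2, hj.2⟩
    · rintro ⟨i, j, -, hX, h1, h2⟩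
      exact ⟨hX, (crossingPairs_subset h1).2, (crossingPairs_subset h2).2⟩
  · rintro X ⟨i, j⟩ hi ⟨i', j'⟩ hi' ⟨-, h1, h2⟩ ⟨-, h1', h2'⟩
    rw [Finset.mem_product] at hi hi'
    exact Prod.ext
      ((rankLabel_existsUnique (by simp) (crossingPairs_subset h1).1
        (crossingPairs_subset h1).2).unique ⟨hi.1, h1⟩ ⟨hi'.1, h1'⟩)
      ((rankLabel_existsUnique (by simp) (crossingPairs_subset h2).1
        (crossingPairs_subset h2).2).unique ⟨hi.2, h2⟩ ⟨hi'.2, h2'⟩)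

end HasBlockPartition

namespace HasBlockPartition

theorem pairs_finset {κ : Type} [DecidableEq κ] (I : κ → Finset ℕ)
    (hI : ∀ i j, i ≠ j → Disjoint (I i) (I j)) {k : ℕ} (hk : ∀ i, (I i).card ≤ k)
    (s : Finset κ) :
    HasBlockPartition (s.biUnion I) (2 * s.card)
      ((14 * ((k / 3 + 1) * (k / 5 + 1))) ^ (s.card / 2) * k ^ (s.card % 2))
      {X | X ⊆ s.biUnion I ∧ ∀ i ∈ s, (X ∩ I i).card = 2} := by
  induction hd : s.card using Nat.twoStepInduction generalizing s with
  | zero =>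
    obtain rfl := Finset.card_eq_zero.1 hd
    simpa [Finset.subset_empty] using powersetCard_zero ∅
  | one =>
    obtain ⟨i, rfl⟩ := Finset.card_eq_one.1 hd
    convert (powersetCard (I i) 2).mono (k' := k) subset_rfl (by simpa using hk i) using 1
    · simp
    · simp
    · ext X
      simp only [Finset.singleton_biUnion, Finset.mem_singleton, forall_eq, Set.mem_ofPred_eq]
      refine and_congr_right fun h => ?_
      rw [Finset.inter_eq_left.2 h]
  | more d ih _ =>
    obtain ⟨i, s', hi, rfl, hs'⟩ := Finset.card_eq_succ.1 hd
    obtain ⟨j, t, hj, rfl, ht⟩ := Finset.card_eq_succ.1 hs'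
    have hit : i ∉ t := fun h => hi (Finset.mem_insert_of_mem h)
    have hij : i ≠ j := fun h => hi (by simp [h])
    have hdisj : Disjoint (I i ∪ I j) (t.biUnion I) := by
      rw [Finset.disjoint_union_left, Finset.disjoint_biUnion_right,
        Finset.disjoint_biUnion_right]
      exact ⟨fun l hl => hI i l (fun h => hit (h ▸ hl)),
        fun l hl => hI j l (fun h => hj (h ▸ hl))⟩
    have h := ((pairs_join (hI i j hij)).mono subset_rfl
      (k' := 14 * ((k / 3 + 1) * (k / 5 + 1))) (by gcongr <;> exact hk _)).join hdisj (ih t ht)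
    rw [Finset.biUnion_insert, Finset.biUnion_insert, ← Finset.union_assoc]
    convert h using 1
    · omega
    · rw [show (d + 2) / 2 = d / 2 + 1 by omega, show (d + 2) % 2 = d % 2 by omega, pow_succ']
      ring
    · ext X
      have e1 : X ∩ (I i ∪ I j) ∩ I i = X ∩ I i := by
        rw [Finset.inter_assoc, Finset.inter_eq_right.2 Finset.subset_union_left]
      have e2 : X ∩ (I i ∪ I j) ∩ I j = X ∩ I j := by
        rw [Finset.inter_assoc, Finset.inter_eq_right.2 Finset.subset_union_right]
      have e3 : ∀ l ∈ t, X ∩ t.biUnion I ∩ I l = X ∩ I l := fun l hl => by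
        rw [Finset.inter_assoc, Finset.inter_eq_right.2 (Finset.subset_biUnion_of_mem I hl)]
      simp only [Set.mem_ofPred_eq, Finset.forall_mem_insert, Finset.inter_subset_right,
        true_and, e1, e2]
      rw [← and_assoc (a := (X ∩ I i).card = 2)]
      refine and_congr_right fun _ => and_congr_right fun _ => forall₂_congr fun l hl => ?_
      rw [e3 l hl]

end HasBlockPartition

theorem card_piAntidiag_le (m e : ℕ) :
    (Finset.piAntidiag (Finset.univ : Finset (Fin m)) e).card ≤ m ^ e := by
  induction e with
  | zero => simp
  | succ e ih =>
    have hsub : Finset.piAntidiag (Finset.univ : Finset (Fin m)) (e + 1) ⊆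
        (Finset.univ ×ˢ Finset.piAntidiag (Finset.univ : Finset (Fin m)) e).image
          (fun p => p.2 + Pi.single p.1 1) := by
      intro a ha
      rw [Finset.mem_piAntidiag] at ha
      obtain ⟨i, -, hi⟩ : ∃ i ∈ Finset.univ, a i ≠ 0 := by
        apply Finset.exists_ne_zero_of_sum_ne_zero
        rw [ha.1]
        omega
      have hle : (Pi.single i 1 : Fin m → ℕ) ≤ a := by
        intro j
        rcases eq_or_ne j i with rfl | hj
        · simpa using Nat.one_le_iff_ne_zero.2 hi
        · simp [hj]
      refine Finset.mem_image.2 ⟨(i, a - Pi.single i 1), ?_, tsub_add_cancel_of_le hle⟩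
      simp only [Finset.mem_product, Finset.mem_univ, Finset.mem_piAntidiag, true_and,
        implies_true, and_true]
      have h : ∑ j, (a - Pi.single i 1 : Fin m → ℕ) j +
          ∑ j, (Pi.single i 1 : Fin m → ℕ) j = e + 1 := by
        rw [← Finset.sum_add_distrib, ← ha.1]
        exact Finset.sum_congr rfl fun j _ => congrFun (tsub_add_cancel_of_le hle) j
      rw [Finset.sum_pi_single'] at h
      simpa using h
    calc _ ≤ _ := (Finset.card_le_card hsub).trans Finset.card_image_le
      _ ≤ m ^ (e + 1) := by
        rw [Finset.card_product, Finset.card_univ, Fintype.card_fin, pow_succ']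
        exact Nat.mul_le_mul_left _ ih

theorem card_even_piAntidiag_le (m d : ℕ) (hd : 2 ≤ d) :
    ((Finset.piAntidiag (Finset.univ : Finset (Fin m)) (2 * d)).filter
      (fun a => ¬(∀ i, a i = 0 ∨ a i = 2) ∧ ∀ i, Even (a i))).card ≤ m ^ (d - 1) := by
  have hsub : (Finset.piAntidiag (Finset.univ : Finset (Fin m)) (2 * d)).filter
      (fun a => ¬(∀ i, a i = 0 ∨ a i = 2) ∧ ∀ i, Even (a i)) ⊆
      (Finset.univ ×ˢ Finset.piAntidiag (Finset.univ : Finset (Fin m)) (d - 2)).image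
        (fun p => 2 • p.2 + Pi.single p.1 4) := by
    intro a ha
    simp only [Finset.mem_filter, Finset.mem_piAntidiag, Finset.mem_univ, implies_true,
      and_true] at ha
    obtain ⟨hsum, hbad, heven⟩ := ha
    push Not at hbad
    obtain ⟨i, hi⟩ := hbad
    have ha4 : 4 ≤ a i := by
      obtain ⟨c, hc⟩ := heven i
      omega
    have hdecomp : 2 • (fun j => (a - Pi.single i 4 : Fin m → ℕ) j / 2) + Pi.single i 4 = a := by
      funext j
      obtain ⟨c, hc⟩ := heven j
      rcases eq_or_ne j i with rfl | hj
      · simp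
        omega
      · simp [hj]
        omega
    refine Finset.mem_image.2 ⟨(i, fun j => (a - Pi.single i 4 : Fin m → ℕ) j / 2), ?_, hdecomp⟩
    simp only [Finset.mem_product, Finset.mem_univ, Finset.mem_piAntidiag, true_and,
      implies_true, and_true]
    have h : 2 * ∑ j, (a - Pi.single i 4 : Fin m → ℕ) j / 2 + ∑ j, (Pi.single i 4 : Fin m → ℕ) j
        = 2 * d := by
      rw [Finset.mul_sum, ← Finset.sum_add_distrib, ← hsum]
      exact Finset.sum_congr rfl fun j _ => congrFun hdecomp j
    rw [Finset.sum_pi_single'] at h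
    simp only [Finset.mem_univ, if_true] at h
    omega
  calc _ ≤ _ := (Finset.card_le_card hsub).trans Finset.card_image_le
    _ ≤ m * m ^ (d - 2) := by
      rw [Finset.card_product, Finset.card_univ, Fintype.card_fin]
      exact Nat.mul_le_mul_left _ (card_piAntidiag_le m _)
    _ = m ^ (d - 1) := by
      rw [← pow_succ']
      congr 1
      omega

theorem sum_eq_two_mul_card {m : ℕ} {a : Fin m → ℕ} (ha : ∀ i, a i = 0 ∨ a i = 2) :
    ∑ i, a i = 2 * (Finset.univ.filter (a · = 2)).card := by
  rw [Finset.card_filter, Finset.mul_sum]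
  refine Finset.sum_congr rfl fun i _ => ?_
  rcases ha i with h | h <;> simp [h]

theorem card_zero_two_piAntidiag_le (m d : ℕ) :
    ((Finset.piAntidiag (Finset.univ : Finset (Fin m)) (2 * d)).filter
      (fun a => ∀ i, a i = 0 ∨ a i = 2)).card ≤ m.choose d := by
  have h : (Finset.powersetCard d (Finset.univ : Finset (Fin m))).card = m.choose d := by simp
  rw [← h]
  refine Finset.card_le_card_of_injOn (fun a => Finset.univ.filter (a · = 2)) ?_ ?_
  · intro a ha
    simp only [Finset.coe_filter, Set.mem_ofPred_eq, Finset.mem_piAntidiag] at ha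
    have := sum_eq_two_mul_card ha.2
    simp only [SetLike.mem_coe, Finset.mem_powersetCard, Finset.subset_univ, true_and]
    have h1 : ∑ i, a i = 2 * d := ha.1.1
    omega
  · intro a ha b hb hab
    simp only [Finset.coe_filter, Set.mem_ofPred_eq, Finset.mem_piAntidiag] at ha hb
    funext i
    have hi := Finset.ext_iff.1 hab i
    simp only [Finset.mem_filter, Finset.mem_univ, true_and] at hi
    have h1 := ha.2 i
    have h2 := hb.2 i
    omega

namespace HasBlockPartition

theorem powersetCard_biUnion {m k d : ℕ} (hd : 2 ≤ d) (hk1 : 1 ≤ k) (I : Fin m → Finset ℕ)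
    (hI : ∀ i j, i ≠ j → Disjoint (I i) (I j)) (hk : ∀ i, (I i).card ≤ k) :
    HasBlockPartition (Finset.univ.biUnion I) (2 * d)
      (m.choose d * ((14 * ((k / 3 + 1) * (k / 5 + 1))) ^ (d / 2) * k ^ (d % 2)) +
        (m ^ (d - 1) * k ^ d + m ^ (2 * d) * k ^ (d - 1)))
      {X | X ⊆ Finset.univ.biUnion I ∧ X.card = 2 * d} := by
  set g := (14 * ((k / 3 + 1) * (k / 5 + 1))) ^ (d / 2) * k ^ (d % 2) with hg
  set T := Finset.piAntidiag (Finset.univ : Finset (Fin m)) (2 * d) with hT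
  have hcard : ∀ X ⊆ Finset.univ.biUnion I, X.card = ∑ i, (X ∩ I i).card := by
    intro X hX
    rw [← Finset.card_biUnion fun i _ j _ hij =>
      Finset.disjoint_of_subset_left Finset.inter_subset_right
        (Finset.disjoint_of_subset_right Finset.inter_subset_right (hI i j hij)),
      ← Finset.inter_biUnion, Finset.inter_eq_left.2 hX]
  have key : ∀ a ∈ T, HasBlockPartition (Finset.univ.biUnion I) (2 * d)
      (if ∀ i, a i = 0 ∨ a i = 2 then g else if ∀ i, Even (a i) then k ^ d else k ^ (d - 1))
      {X | X ⊆ Finset.univ.biUnion I ∧ ∀ i, (X ∩ I i).card = a i} := by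
    intro a ha
    have hsum : ∑ i, a i = 2 * d := (Finset.mem_piAntidiag.1 ha).1
    by_cases hgood : ∀ i, a i = 0 ∨ a i = 2
    · rw [if_pos hgood]
      have hs : (Finset.univ.filter (a · = 2)).card = d := by
        have := sum_eq_two_mul_card hgood
        omega
      have h := (pairs_finset I hI hk (Finset.univ.filter (a · = 2))).mono
        (Finset.biUnion_subset_biUnion_of_subset_left I (Finset.subset_univ _)) le_rfl
      rw [hs] at h
      convert h using 1
      ext X
      simp only [Set.mem_ofPred_eq, Finset.mem_filter, Finset.mem_univ, true_and]
      constructor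
      · rintro ⟨hX, hXa⟩
        refine ⟨fun x hx => ?_, fun i hi => (hXa i).trans hi⟩
        obtain ⟨i, -, hi⟩ := Finset.mem_biUnion.1 (hX hx)
        refine Finset.mem_biUnion.2 ⟨i, ?_, hi⟩
        have hpos : 0 < (X ∩ I i).card := Finset.card_pos.2 ⟨x, Finset.mem_inter.2 ⟨hx, hi⟩⟩
        have := hXa i
        have := hgood i
        simp only [Finset.mem_filter, Finset.mem_univ, true_and]
        omega
      · rintro ⟨hX, hXa⟩
        refine ⟨hX.trans
          (Finset.biUnion_subset_biUnion_of_subset_left I (Finset.subset_univ _)),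
          fun i => ?_⟩
        rcases hgood i with hi | hi
        · rw [hi, Finset.card_eq_zero, ← Finset.disjoint_iff_inter_eq_empty]
          refine Finset.disjoint_of_subset_left hX ?_
          rw [Finset.disjoint_biUnion_left]
          intro j hj
          refine hI j i ?_
          rintro rfl
          simp [hi] at hj
        · rw [hi, hXa i hi]
    · rw [if_neg hgood]
      have h := finset_join Finset.univ I hI a _ _
        (fun i _ => powersetCard (I i) (a i))
      rw [hsum] at h
      convert h.mono (k' := if ∀ i, Even (a i) then k ^ d else k ^ (d - 1)) subset_rfl ?_ using 1
      · ext X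
        simp
      · have hle : ∏ i, (I i).card ^ (a i / 2) ≤ k ^ ∑ i, a i / 2 := by
          rw [← Finset.prod_pow_eq_pow_sum]
          exact Finset.prod_le_prod' fun i _ => Nat.pow_le_pow_left (hk i) _
        refine hle.trans ?_
        split_ifs with heven
        · refine Nat.pow_le_pow_right hk1 ?_
          have : 2 * ∑ i, a i / 2 ≤ ∑ i, a i := by
            rw [Finset.mul_sum]
            exact Finset.sum_le_sum fun i _ => Nat.mul_div_le _ _
          omega
        · refine Nat.pow_le_pow_right hk1 ?_
          push Not at heven
          obtain ⟨j, hj⟩ := heven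
          have : 2 * ∑ i, a i / 2 < ∑ i, a i := by
            rw [Finset.mul_sum]
            refine Finset.sum_lt_sum (fun i _ => Nat.mul_div_le _ _) ⟨j, Finset.mem_univ j, ?_⟩
            rw [Nat.not_even_iff] at hj
            omega
          omega
  have h := biUnion T (F := {X | X ⊆ Finset.univ.biUnion I ∧ X.card = 2 * d}) _ _ key ?_ ?_
  · refine h.mono subset_rfl ?_
    rw [Finset.sum_ite, Finset.sum_ite, Finset.sum_const, Finset.sum_const, Finset.sum_const,
      smul_eq_mul, smul_eq_mul, smul_eq_mul, Finset.filter_filter, Finset.filter_filter]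
    refine Nat.add_le_add (Nat.mul_le_mul_right _ (card_zero_two_piAntidiag_le m d))
      (Nat.add_le_add (Nat.mul_le_mul_right _ (card_even_piAntidiag_le m d hd))
        (Nat.mul_le_mul_right _ ?_))
    exact (Finset.card_filter_le _ _).trans (card_piAntidiag_le m _)
  · intro X
    simp only [Set.mem_ofPred_eq]
    constructor
    · rintro ⟨hX, hc⟩
      refine ⟨fun i => (X ∩ I i).card, ?_, hX, fun _ => rfl⟩
      rw [hT, Finset.mem_piAntidiag]
      exact ⟨(hcard X hX).symm.trans hc, by simp⟩
    · rintro ⟨a, ha, hX, hXa⟩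
      refine ⟨hX, ?_⟩
      rw [hcard X hX, ← (Finset.mem_piAntidiag.1 ha).1]
      exact Finset.sum_congr rfl fun i _ => hXa i
  · rintro X a - b - ⟨-, ha⟩ ⟨-, hb⟩
    funext i
    rw [← ha i, hb i]

end HasBlockPartition

theorem f_two_mul_le {m d : ℕ} (hm : 0 < m) (hd : 2 ≤ d) (n k : ℕ) (hk : k = n / m + 1) :
    f (2 * d) n ≤ m.choose d * ((14 * ((k / 3 + 1) * (k / 5 + 1))) ^ (d / 2) * k ^ (d % 2)) +
      (m ^ (d - 1) * k ^ d + m ^ (2 * d) * k ^ (d - 1)) := by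
  have hk1 : 1 ≤ k := hk ▸ Nat.succ_pos _
  have hn : n < m * k := hk ▸ Nat.lt_mul_div_succ n hm
  let I : Fin m → Finset ℕ := fun i => (Finset.range n).filter (· / k = i)
  have hU : Finset.univ.biUnion I = Finset.range n := by
    ext x
    simp only [I, Finset.mem_biUnion, Finset.mem_univ, true_and, Finset.mem_filter]
    constructor
    · rintro ⟨_, h, -⟩
      exact h
    · intro h
      have hx : x / k < m := by
        rw [Nat.div_lt_iff_lt_mul hk1]
        exact (Finset.mem_range.1 h).trans hn
      exact ⟨⟨x / k, hx⟩, h, rfl⟩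
  have hI : ∀ i j, i ≠ j → Disjoint (I i) (I j) := by
    intro i j hij
    rw [Finset.disjoint_left]
    intro x hx hy
    simp only [I, Finset.mem_filter] at hx hy
    exact hij (Fin.ext (hx.2.symm.trans hy.2))
  have hcard : ∀ i, (I i).card ≤ k := by
    intro i
    have hsub : I i ⊆ Finset.Ico (i * k) (i * k + k) := by
      intro x hx
      simp only [I, Finset.mem_filter] at hx
      rw [Finset.mem_Ico, ← hx.2]
      exact ⟨Nat.div_mul_le_self x k, by
        have := Nat.lt_mul_div_succ x hk1
        rw [mul_comm]
        rwa [Nat.mul_succ] at this⟩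
    simpa using Finset.card_le_card hsub
  have h := HasBlockPartition.powersetCard_biUnion hd hk1 I hI hcard
  rw [hU] at h
  exact f_le_of_hasBlockPartition h

theorem f_two_mul_le_real {m d : ℕ} (hm : 0 < m) (hd : 2 ≤ d) {n : ℕ} (hn : 0 < n) :
    (f (2 * d) n : ℝ) ≤ (((14 / 15 : ℝ) ^ (d / 2) / d.factorial + 1 / m) * (1 + 6 * m / n) ^ d +
      m ^ (d + 1) * (1 + 6 * m / n) ^ (d - 1) / n) * (n : ℝ) ^ d := by
  obtain ⟨k, hk⟩ : ∃ k, k = n / m + 1 := ⟨_, rfl⟩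
  have hm' : (0 : ℝ) < m := by exact_mod_cast hm
  have hn' : (0 : ℝ) < n := by exact_mod_cast hn
  set K : ℝ := n / m + 6 with hK
  have hkK : (k : ℝ) + 5 ≤ K := by
    have h : ((n / m : ℕ) : ℝ) ≤ n / m := Nat.cast_div_le
    rw [hk, hK]
    push_cast
    linarith
  have hk0 : (0 : ℝ) ≤ k := Nat.cast_nonneg k
  have hK0 : 0 < K := by linarith
  have hg : (14 * (((k / 3 : ℕ) + 1 : ℝ) * ((k / 5 : ℕ) + 1))) ≤ 14 / 15 * K ^ 2 := by
    have h3 : ((k / 3 : ℕ) : ℝ) ≤ k / 3 := by exact_mod_cast Nat.cast_div_le (α := ℝ)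
    have h5 : ((k / 5 : ℕ) : ℝ) ≤ k / 5 := by exact_mod_cast Nat.cast_div_le (α := ℝ)
    have h3' : ((k / 3 : ℕ) : ℝ) + 1 ≤ K / 3 := by linarith
    have h5' : ((k / 5 : ℕ) : ℝ) + 1 ≤ K / 5 := by linarith
    calc _ ≤ 14 * (K / 3 * (K / 5)) := by gcongr
      _ = _ := by ring
  have hG : (14 * (((k / 3 : ℕ) + 1 : ℝ) * ((k / 5 : ℕ) + 1))) ^ (d / 2) * (k : ℝ) ^ (d % 2) ≤
      (14 / 15) ^ (d / 2) * K ^ d := by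
    calc _ ≤ (14 / 15 * K ^ 2) ^ (d / 2) * K ^ (d % 2) := by
          gcongr
          linarith
      _ = (14 / 15) ^ (d / 2) * K ^ (2 * (d / 2) + d % 2) := by
          rw [mul_pow, ← pow_mul, pow_add, mul_assoc]
      _ = _ := by rw [Nat.div_add_mod]
  have hf : (f (2 * d) n : ℝ) ≤ m.choose d *
      ((14 * (((k / 3 : ℕ) + 1 : ℝ) * ((k / 5 : ℕ) + 1))) ^ (d / 2) * (k : ℝ) ^ (d % 2)) +
      (m ^ (d - 1) * (k : ℝ) ^ d + m ^ (2 * d) * (k : ℝ) ^ (d - 1)) := by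
    exact_mod_cast f_two_mul_le hm hd n k hk
  have hkK' : (k : ℝ) ≤ K := by linarith
  have hx : 1 + 6 * m / n = m * K / (n : ℝ) := by
    rw [hK]
    field_simp
  calc _ ≤ _ := hf
    _ ≤ (m : ℝ) ^ d / d.factorial * ((14 / 15) ^ (d / 2) * K ^ d) +
        (m ^ (d - 1) * K ^ d + m ^ (2 * d) * K ^ (d - 1)) := by
      gcongr
      exact Nat.choose_le_pow_div d m
    _ = _ := by
      obtain ⟨e, rfl⟩ : ∃ e, d = e + 1 := ⟨d - 1, by omega⟩
      simp only [hx, Nat.add_sub_cancel, div_pow]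
      field_simp
      ring_nf

theorem tendsto_choose_div_pow (d : ℕ) :
    Filter.Tendsto (fun n : ℕ => (n.choose d : ℝ) / (n : ℝ) ^ d) Filter.atTop
      (nhds (1 / d.factorial)) := by
  have h := (Asymptotics.isEquivalent_iff_tendsto_one ?_).1 (isEquivalent_choose d)
  · refine (h.div_const (d.factorial : ℝ)).congr fun n => ?_
    have : (d.factorial : ℝ) ≠ 0 := by positivity
    simp only [Pi.div_apply]
    field_simp
  · filter_upwards [Filter.eventually_gt_atTop 0] with n hn
    positivity

theorem eventually_f_two_mul_le {d : ℕ} (hd : 2 ≤ d) {ε : ℝ} (hε : 0 < ε) :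
    ∀ᶠ n : ℕ in Filter.atTop,
      (f (2 * d) n : ℝ) ≤ (14 / 15 : ℝ) ^ (d / 2) * (1 + ε) * n.choose d := by
  set q : ℝ := (14 / 15 : ℝ) ^ (d / 2) with hq
  have hq0 : 0 < q := by positivity
  obtain ⟨m, hm⟩ := exists_nat_one_div_lt (show 0 < q * ε / d.factorial by positivity)
  have hinv : Filter.Tendsto (fun n : ℕ => 1 + 6 * ((m + 1 : ℕ) : ℝ) / n)
      Filter.atTop (nhds 1) := by
    simpa using (tendsto_const_div_atTop_nhds_zero_nat (6 * ((m + 1 : ℕ) : ℝ))).const_add 1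
  have hlhs : Filter.Tendsto (fun n : ℕ => (q / d.factorial + 1 / ((m + 1 : ℕ) : ℝ)) *
        (1 + 6 * ((m + 1 : ℕ) : ℝ) / n) ^ d +
      ((m + 1 : ℕ) : ℝ) ^ (d + 1) * (1 + 6 * ((m + 1 : ℕ) : ℝ) / n) ^ (d - 1) / n)
      Filter.atTop (nhds (q / d.factorial + 1 / ((m + 1 : ℕ) : ℝ))) := by
    simpa using ((hinv.pow d).const_mul (q / d.factorial + 1 / ((m + 1 : ℕ) : ℝ))).add
      (((hinv.pow (d - 1)).const_mul (((m + 1 : ℕ) : ℝ) ^ (d + 1))).div_atTop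
        tendsto_natCast_atTop_atTop)
  have hrhs := (tendsto_choose_div_pow d).const_mul (q * (1 + ε))
  have hlt : q / d.factorial + 1 / ((m + 1 : ℕ) : ℝ) < q * (1 + ε) * (1 / d.factorial) := by
    push_cast
    calc _ < q / d.factorial + q * ε / d.factorial := by gcongr
      _ = _ := by ring
  filter_upwards [hlhs.eventually_lt hrhs hlt, Filter.eventually_gt_atTop 0] with n h hn
  refine (f_two_mul_le_real m.succ_pos hd hn).trans ?_
  have hn' : (0 : ℝ) < (n : ℝ) ^ d := by positivity
  calc _ ≤ q * (1 + ε) * ((n.choose d : ℝ) / (n : ℝ) ^ d) * (n : ℝ) ^ d :=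
        mul_le_mul_of_nonneg_right h.le hn'.le
    _ = _ := by field_simp

theorem graham_pollak_even_upper_bound
    (r : ℕ) (hr : 6 ≤ r) (hre : Even r) (ε : ℝ) (hε : 0 < ε) :
    ∃ N : ℕ, ∀ n : ℕ, N ≤ n →
      (f r n : ℝ) ≤ ((14 : ℝ) / 15) ^ ((r : ℝ) / 6) * (1 + ε) * (n.choose (r / 2)) := by
  obtain ⟨d, rfl⟩ := even_iff_exists_two_mul.1 hre
  obtain ⟨N, hN⟩ := Filter.eventually_atTop.1
    (eventually_f_two_mul_le (d := d) (by omega) hε)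
  refine ⟨N, fun n hn => (hN n hn).trans ?_⟩
  rw [Nat.mul_div_cancel_left d two_pos]
  gcongr
  rw [← Real.rpow_natCast]
  refine Real.rpow_le_rpow_of_exponent_ge (by norm_num) (by norm_num) ?_
  have h : d ≤ 3 * (d / 2) := by omega
  have h' : (d : ℝ) ≤ 3 * (d / 2 : ℕ) := by exact_mod_cast h
  push_cast at h' ⊢
  linarith
end

section
/- For every even integer m ≥ 8 and every integer n ≥ m, the quantity f_m(n) satisfies f_m(n) ≤ (14/15)^(m/6) · n^(m/2) / (m/2)! + n^(m/2 − 1) · log₂ n. -/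
/-- `IsSumOfProducts M r k p`: the element `p` is a sum of at most `k` products, each of `r`
elements of `M`. -/
def IsSumOfProducts {R : Type*} [CommSemiring R] (M : AddSubmonoid R) (r k : ℕ) (p : R) : Prop :=
  ∃ L : List (List R), L.length ≤ k ∧ (∀ t ∈ L, t.length = r ∧ ∀ a ∈ t, a ∈ M) ∧
    p = (L.map List.prod).sum

/-- The elementary symmetric function of degree `r` of the entries of a list. -/
def listEsymm {R : Type*} [CommSemiring R] : List R → ℕ → R
  | _, 0 => 1
  | [], _ + 1 => 0
  | a :: l, r + 1 => listEsymm l (r + 1) + a * listEsymm l r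

section Framework

variable {R : Type*} [CommSemiring R] {M : AddSubmonoid R}

namespace IsSumOfProducts

theorem mono {r k k' : ℕ} {p : R} (h : IsSumOfProducts M r k p) (hk : k ≤ k') :
    IsSumOfProducts M r k' p := by
  obtain ⟨L, h1, h2, h3⟩ := h
  exact ⟨L, h1.trans hk, h2, h3⟩

theorem zero (r k : ℕ) : IsSumOfProducts M r k 0 := ⟨[], by simp⟩

theorem one : IsSumOfProducts M 0 1 1 := ⟨[[]], by simp⟩

theorem of_mem {a : R} (ha : a ∈ M) : IsSumOfProducts M 1 1 a := ⟨[[a]], by simpa using ha⟩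

theorem add {r k k' : ℕ} {p q : R} (hp : IsSumOfProducts M r k p)
    (hq : IsSumOfProducts M r k' q) : IsSumOfProducts M r (k + k') (p + q) := by
  obtain ⟨L, h1, h2, h3⟩ := hp
  obtain ⟨L', h1', h2', h3'⟩ := hq
  refine ⟨L ++ L', by simp; omega, ?_, by simp [h3, h3']⟩
  intro t ht
  rcases List.mem_append.1 ht with ht | ht
  exacts [h2 t ht, h2' t ht]

theorem sum {ι : Type*} (s : Finset ι) {r : ℕ} {k : ι → ℕ} {p : ι → R}
    (h : ∀ i ∈ s, IsSumOfProducts M r (k i) (p i)) :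
    IsSumOfProducts M r (∑ i ∈ s, k i) (∑ i ∈ s, p i) := by
  classical
  induction s using Finset.induction_on with
  | empty => simpa using zero r 0
  | insert a s ha ih =>
    rw [Finset.sum_insert ha, Finset.sum_insert ha]
    exact (h a (by simp)).add (ih fun i hi => h i (by simp [hi]))

theorem mul {r s k l : ℕ} {p q : R} (hp : IsSumOfProducts M r k p)
    (hq : IsSumOfProducts M s l q) : IsSumOfProducts M (r + s) (k * l) (p * q) := by
  obtain ⟨L, h1, h2, rfl⟩ := hp
  refine mono ?_ (Nat.mul_le_mul_right l h1)
  clear h1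
  induction L with
  | nil => simpa using zero (r + s) _
  | cons t L ih =>
    have hL := ih fun u hu => h2 u (by simp [hu])
    have ht := h2 t (by simp)
    have key : IsSumOfProducts M (r + s) l (t.prod * q) := by
      obtain ⟨L', h1', h2', rfl⟩ := hq
      refine ⟨L'.map (t ++ ·), by simpa using h1', ?_, ?_⟩
      · intro u hu
        obtain ⟨v, hv, rfl⟩ := List.mem_map.1 hu
        have := h2' v hv
        refine ⟨by simp [ht.1, this.1], fun a ha => ?_⟩
        rcases List.mem_append.1 ha with ha | ha
        exacts [ht.2 a ha, this.2 a ha]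
      · simp [List.map_map, Function.comp_def, List.sum_map_mul_left]
    have := key.add hL
    simp only [List.length_cons, List.map_cons, List.sum_cons, add_mul, one_mul]
    rwa [add_comm _ l]

theorem mul_mem {a b : R} (ha : a ∈ M) (hb : b ∈ M) : IsSumOfProducts M 2 1 (a * b) :=
  (of_mem ha).mul (of_mem hb)

end IsSumOfProducts

@[simp] theorem listEsymm_zero (l : List R) : listEsymm l 0 = 1 := by
  cases l <;> rfl

@[simp] theorem listEsymm_nil_succ (r : ℕ) : listEsymm ([] : List R) (r + 1) = 0 := rfl

@[simp] theorem listEsymm_cons_succ (a : R) (l : List R) (r : ℕ) :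
    listEsymm (a :: l) (r + 1) = listEsymm l (r + 1) + a * listEsymm l r := rfl

theorem listEsymm_one (l : List R) : listEsymm l 1 = l.sum := by
  induction l with
  | nil => rfl
  | cons a l ih => simp [ih, add_comm]

theorem listEsymm_append (l₁ l₂ : List R) (r : ℕ) :
    listEsymm (l₁ ++ l₂) r =
      ∑ p ∈ Finset.HasAntidiagonal.antidiagonal r, listEsymm l₁ p.1 * listEsymm l₂ p.2 := by
  induction l₁ generalizing r with
  | nil =>
    cases r with
    | zero => simp
    | succ r => simp [Finset.Nat.sum_antidiagonal_succ]
  | cons a l ih =>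
    cases r with
    | zero => simp
    | succ r =>
      rw [List.cons_append, listEsymm_cons_succ, ih, ih, Finset.Nat.sum_antidiagonal_succ,
        Finset.Nat.sum_antidiagonal_succ, Finset.mul_sum, add_assoc, ← Finset.sum_add_distrib]
      simp [add_mul, mul_assoc]

theorem listEsymm_merge (a b : R) (l : List R) (r : ℕ) :
    listEsymm (a :: b :: l) (r + 2) = listEsymm ((a + b) :: l) (r + 2) + a * b * listEsymm l r := by
  simp only [listEsymm_cons_succ]
  ring

theorem listEsymm_two_append (l₁ l₂ : List R) :
    listEsymm (l₁ ++ l₂) 2 = listEsymm (l₁.sum :: l₂) 2 + listEsymm l₁ 2 := by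
  rw [listEsymm_append]
  simp [Finset.Nat.sum_antidiagonal_succ, listEsymm_one]
  ring

theorem isSumOfProducts_listEsymm_choose (r n : ℕ) :
    ∀ l : List R, l.length = n → (∀ a ∈ l, a ∈ M) →
      IsSumOfProducts M r (n.choose (r / 2)) (listEsymm l r) := by
  induction r using Nat.strong_induction_on generalizing n with
  | _ r ihr =>
    match r, ihr with
    | 0, _ => intro l _ _; simpa using IsSumOfProducts.one
    | 1, _ =>
      intro l _ hM
      rw [listEsymm_one]
      simpa using IsSumOfProducts.of_mem (M.list_sum_mem hM)
    | r + 2, ihr =>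
      induction n using Nat.strong_induction_on with
      | _ n ihn =>
        intro l hl hM
        match l, hl with
        | [], _ => exact IsSumOfProducts.zero _ _
        | [a], _ =>
          have : listEsymm [a] (r + 2) = 0 := by simp
          rw [this]
          exact IsSumOfProducts.zero _ _
        | a :: b :: l, hl =>
          have ha : a ∈ M := hM a (by simp)
          have hb : b ∈ M := hM b (by simp)
          have hl' : ∀ c ∈ l, c ∈ M := fun c hc => hM c (by simp [hc])
          simp only [List.length_cons] at hl
          subst hl
          rw [listEsymm_merge]
          have h1 := ihn (l.length + 1) (by omega) ((a + b) :: l) (by simp) (by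
            intro c hc
            rcases List.mem_cons.1 hc with rfl | hc
            exacts [M.add_mem ha hb, hl' c hc])
          have h2 := (IsSumOfProducts.mul_mem ha hb).mul (ihr r (by omega) l.length l rfl hl')
          rw [add_comm 2 r] at h2
          refine (h1.add h2).mono ?_
          have e : (r + 2) / 2 = r / 2 + 1 := by omega
          rw [e, one_mul, Nat.choose_succ_succ' (l.length + 1) (r / 2), add_comm]
          exact Nat.add_le_add_right (Nat.choose_le_choose _ (Nat.le_succ _)) _

end Framework

section PairProduct

variable {R : Type*} [CommSemiring R] {M : AddSubmonoid R}

/-- A permutation of order three of `{0, …, 15}`, with the single fixed point `15`. -/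
def rotate (i : ℕ) : ℕ := if i < 15 then i / 3 * 3 + (i + 1) % 3 else i

/-- Four edge-disjoint bicliques on the vertices `0, …, 15`. -/
def fourBicliques (b : ℕ → R) : R :=
  (b 0 + b 1 + b 4 + b 5 + b 6 + b 8 + b 11 + b 12) * (b 10 + b 14)
    + b 8 * (b 1 + b 2 + b 4 + b 5 + b 6 + b 9 + b 11 + b 15)
    + (b 0 + b 4 + b 7 + b 12 + b 15) * (b 2 + b 11)
    + (b 0 + b 1 + b 5 + b 6 + b 15) * (b 4 + b 13)

/-- Six edge-disjoint bicliques on the vertices `0, …, 15`, which cover all the edges of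
`fourBicliques` apart from those of `commonMatching`. -/
def sixBicliques (b : ℕ → R) : R :=
  (b 0 + b 4 + b 5 + b 6 + b 8 + b 12) * b 14 + b 10 * (b 1 + b 4 + b 5 + b 12)
    + (b 4 + b 8 + b 13) * (b 1 + b 5 + b 6 + b 15) + (b 0 + b 8) * (b 4 + b 10)
    + b 2 * (b 0 + b 4 + b 7 + b 8 + b 15)
    + (b 0 + b 4 + b 8 + b 10 + b 12 + b 14 + b 15) * b 11

/-- A matching on the vertices `0, …, 15` that is invariant under `rotate`. -/
def commonMatching (b : ℕ → R) : R :=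
  b 0 * b 13 + b 1 * b 14 + b 2 * b 12 + b 6 * b 10 + b 7 * b 11 + b 8 * b 9

theorem fourBicliques_eq (b : ℕ → R) :
    fourBicliques b = sixBicliques b + commonMatching b := by
  simp only [fourBicliques, sixBicliques, commonMatching]
  ring

theorem commonMatching_rotate (b : ℕ → R) :
    commonMatching (fun i => b (rotate i)) = commonMatching b := by
  simp [commonMatching, rotate]
  ring

theorem listEsymm_two_sixteen (b : ℕ → R) :
    listEsymm ((List.range 16).map b) 2 =
      sixBicliques b + sixBicliques (fun i => b (rotate i))
        + sixBicliques (fun i => b (rotate (rotate i))) + commonMatching b := by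
  simp [List.range_succ, listEsymm, sixBicliques, commonMatching, rotate]
  ring

theorem isSumOfProducts_fourBicliques {b : ℕ → R} (hb : ∀ i, b i ∈ M) :
    IsSumOfProducts M 2 4 (fourBicliques b) := by
  unfold fourBicliques
  refine ((IsSumOfProducts.add (k := 1) (k' := 1) ?_ ?_).add (k' := 1) ?_).add (k' := 1) ?_ <;>
    refine IsSumOfProducts.mul_mem ?_ ?_ <;> repeat' first | exact hb _ | apply M.add_mem

theorem isSumOfProducts_sixBicliques {b : ℕ → R} (hb : ∀ i, b i ∈ M) :
    IsSumOfProducts M 2 6 (sixBicliques b) := by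
  unfold sixBicliques
  refine ((((IsSumOfProducts.add (k := 1) (k' := 1) ?_ ?_).add (k' := 1) ?_).add (k' := 1) ?_).add
    (k' := 1) ?_).add (k' := 1) ?_ <;>
    refine IsSumOfProducts.mul_mem ?_ ?_ <;> repeat' first | exact hb _ | apply M.add_mem

theorem isSumOfProducts_four_sixteen {l l' : List R} (hl : l.length = 4) (hl' : l'.length = 16)
    (hM : ∀ a ∈ l, a ∈ M) (hM' : ∀ a ∈ l', a ∈ M) :
    IsSumOfProducts M 4 42 (listEsymm l 2 * listEsymm l' 2) := by
  obtain ⟨b, hb, rfl⟩ : ∃ b : ℕ → R, (∀ i, b i ∈ M) ∧ l' = (List.range 16).map b := by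
    refine ⟨fun i => l'.getD i 0, fun i => ?_, ?_⟩
    · change l'.getD i 0 ∈ M
      rcases Nat.lt_or_ge i l'.length with hi | hi
      · rw [List.getD_eq_getElem _ _ hi]
        exact hM' _ (List.getElem_mem hi)
      · rw [List.getD_eq_default _ _ hi]
        exact M.zero_mem
    · refine List.ext_getElem (by simp [hl']) fun i h1 h2 => ?_
      simp [h1]
  match l, hl with
  | [a₀, a₁, a₂, a₃], _ =>
    have h₀ : a₀ ∈ M := hM _ (by simp)
    have h₁ : a₁ ∈ M := hM _ (by simp)
    have h₂ : a₂ ∈ M := hM _ (by simp)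
    have h₃ : a₃ ∈ M := hM _ (by simp)
    have key : listEsymm [a₀, a₁, a₂, a₃] 2 * listEsymm ((List.range 16).map b) 2 =
        (a₀ + a₁) * (a₂ + a₃) * sixBicliques b
        + (a₀ * a₁ + a₂ * a₃) * fourBicliques b
        + ((a₀ + a₂) * (a₁ + a₃) * sixBicliques (fun i => b (rotate i))
        + (a₀ * a₂ + a₁ * a₃) * fourBicliques (fun i => b (rotate i)))
        + ((a₀ + a₃) * (a₁ + a₂) * sixBicliques (fun i => b (rotate (rotate i)))
        + (a₀ * a₃ + a₁ * a₂) * fourBicliques (fun i => b (rotate (rotate i)))) := by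
      rw [listEsymm_two_sixteen, fourBicliques_eq, fourBicliques_eq, fourBicliques_eq,
        commonMatching_rotate, commonMatching_rotate (fun i => b (rotate i)),
        commonMatching_rotate]
      simp only [listEsymm_cons_succ, listEsymm_zero, listEsymm_nil_succ]
      ring
    have block : ∀ {x y z w : R} {c : ℕ → R}, x ∈ M → y ∈ M → z ∈ M → w ∈ M → (∀ i, c i ∈ M) →
        IsSumOfProducts M 4 14
          ((x + y) * (z + w) * sixBicliques c + (x * y + z * w) * fourBicliques c) :=
      fun hx hy hz hw hc =>
        ((IsSumOfProducts.mul_mem (M.add_mem hx hy) (M.add_mem hz hw)).mul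
          (isSumOfProducts_sixBicliques hc)).add
        (((IsSumOfProducts.mul_mem hx hy).add (IsSumOfProducts.mul_mem hz hw)).mul
          (isSumOfProducts_fourBicliques hc))
    rw [key]
    exact ((block h₀ h₁ h₂ h₃ hb).add (block h₀ h₂ h₁ h₃ fun _ => hb _)).add
      (block h₀ h₃ h₁ h₂ fun _ => hb _)

theorem exists_cons_of_split {l : List R} {s n : ℕ} (hl : l.length = s + n)
    (hM : ∀ a ∈ l, a ∈ M) :
    ∃ l₁ l₂ : List R, l₁.length = s ∧ l₂.length = n + 1 ∧ (∀ a ∈ l₁, a ∈ M) ∧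
      (∀ a ∈ l₂, a ∈ M) ∧ listEsymm l 2 = listEsymm l₂ 2 + listEsymm l₁ 2 := by
  have h1 : ∀ a ∈ l.take s, a ∈ M := fun a ha => hM a (List.mem_of_mem_take ha)
  have h2 : ∀ a ∈ l.drop s, a ∈ M := fun a ha => hM a (List.mem_of_mem_drop ha)
  refine ⟨l.take s, (l.take s).sum :: l.drop s, by simp [hl], by simp [hl], h1, ?_, ?_⟩
  · intro a ha
    rcases List.mem_cons.1 ha with rfl | ha
    exacts [M.list_sum_mem h1, h2 a ha]
  · rw [← listEsymm_two_append, List.take_append_drop]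

theorem isSumOfProducts_listEsymm_two (n : ℕ) :
    ∀ l : List R, l.length = n → (∀ a ∈ l, a ∈ M) →
      IsSumOfProducts M 2 (n - 1) (listEsymm l 2) := by
  induction n using Nat.strong_induction_on with
  | _ n ih =>
    intro l hl hM
    rcases Nat.lt_or_ge n 2 with hn | hn
    · have : listEsymm l 2 = 0 := by
        match l, hl with
        | [], _ => rfl
        | [a], _ => simp
        | _ :: _ :: _, hl => simp at hl; omega
      rw [this]
      exact IsSumOfProducts.zero _ _
    · obtain ⟨l₁, l₂, h1, h2, hM1, hM2, h⟩ := exists_cons_of_split (s := 2) (n := n - 2)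
        (by omega) hM
      rw [h]
      refine ((ih (n - 1) (by omega) l₂ (by omega) hM2).add (k' := 1) ?_).mono (by omega)
      match l₁, h1 with
      | [a, b], _ =>
        have : listEsymm [a, b] 2 = a * b := by simp
        rw [this]
        exact IsSumOfProducts.mul_mem (hM1 a (by simp)) (hM1 b (by simp))

theorem exists_isSumOfProducts_four_left (n : ℕ) :
    ∃ k, 5 * k ≤ 14 * n ∧ ∀ l l' : List R, l.length = 4 → l'.length = n →
      (∀ a ∈ l, a ∈ M) → (∀ a ∈ l', a ∈ M) →
      IsSumOfProducts M 4 k (listEsymm l 2 * listEsymm l' 2) := by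
  induction n using Nat.strong_induction_on with
  | _ n ih =>
    rcases Nat.lt_or_ge n 16 with hn | hn
    · exact ⟨3 * (n - 1), by omega, fun l l' hl hl' hM hM' =>
        (isSumOfProducts_listEsymm_two 4 l hl hM).mul (isSumOfProducts_listEsymm_two n l' hl' hM')⟩
    · obtain ⟨k, hk, h⟩ := ih (n - 15) (by omega)
      refine ⟨k + 42, by omega, fun l l' hl hl' hM hM' => ?_⟩
      obtain ⟨l₁, l₂, h1, h2, hM1, hM2, he⟩ := exists_cons_of_split (s := 16) (n := n - 16)
        (by omega) hM'
      rw [he, mul_add]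
      exact (h l l₂ hl (by omega) hM hM2).add (isSumOfProducts_four_sixteen hl h1 hM hM1)

theorem exists_isSumOfProducts_pair (m n : ℕ) :
    ∃ k, 15 * k ≤ 14 * (m * n) ∧ ∀ l l' : List R, l.length = m → l'.length = n →
      (∀ a ∈ l, a ∈ M) → (∀ a ∈ l', a ∈ M) →
      IsSumOfProducts M 4 k (listEsymm l 2 * listEsymm l' 2) := by
  induction m using Nat.strong_induction_on with
  | _ m ih =>
    rcases Nat.lt_or_ge m 4 with hm | hm
    · refine ⟨(m - 1) * (n - 1), ?_, fun l l' hl hl' hM hM' =>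
        (isSumOfProducts_listEsymm_two m l hl hM).mul (isSumOfProducts_listEsymm_two n l' hl' hM')⟩
      interval_cases m <;> omega
    · obtain ⟨k, hk, h⟩ := ih (m - 3) (by omega)
      obtain ⟨k', hk', h'⟩ := exists_isSumOfProducts_four_left (M := M) n
      refine ⟨k + k', ?_, fun l l' hl hl' hM hM' => ?_⟩
      · obtain ⟨m, rfl⟩ := Nat.exists_eq_add_of_le' hm
        rw [show m + 4 - 3 = m + 1 by omega] at hk
        nlinarith
      · obtain ⟨l₁, l₂, h1, h2, hM1, hM2, he⟩ := exists_cons_of_split (s := 4) (n := m - 4)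
          (by omega) hM
        rw [he, add_mul]
        exact (h l₂ l' (by omega) hl' hM2 hM').add (h' l₁ l' h1 hl' hM1 hM')

end PairProduct

section Cost

variable {R : Type*} [CommSemiring R] (M : AddSubmonoid R)

/-- The least `k` such that the degree `r` elementary symmetric function of any `n` elements of `M`
is a sum of `k` products of `r` elements of `M`. -/
noncomputable def esymmCost (r n : ℕ) : ℕ :=
  sInf {k | ∀ l : List R, l.length = n → (∀ a ∈ l, a ∈ M) →
    IsSumOfProducts M r k (listEsymm l r)}

theorem isSumOfProducts_esymmCost (r : ℕ) {l : List R} (hM : ∀ a ∈ l, a ∈ M) :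
    IsSumOfProducts M r (esymmCost M r l.length) (listEsymm l r) :=
  Nat.sInf_mem (s := {k | ∀ l' : List R, l'.length = l.length → (∀ a ∈ l', a ∈ M) →
    IsSumOfProducts M r k (listEsymm l' r)})
    ⟨_, isSumOfProducts_listEsymm_choose r l.length⟩ l rfl hM

variable {M} in
theorem esymmCost_le {r n k : ℕ} (h : ∀ l : List R, l.length = n → (∀ a ∈ l, a ∈ M) →
    IsSumOfProducts M r k (listEsymm l r)) : esymmCost M r n ≤ k :=
  Nat.sInf_le h

theorem esymmCost_le_choose (r n : ℕ) : esymmCost M r n ≤ n.choose (r / 2) :=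
  esymmCost_le (isSumOfProducts_listEsymm_choose r n)

theorem exists_take_drop {l : List R} {x y : ℕ} (hl : l.length = x + y) (hM : ∀ a ∈ l, a ∈ M) :
    ∃ l₁ l₂ : List R, l = l₁ ++ l₂ ∧ l₁.length = x ∧ l₂.length = y ∧ (∀ a ∈ l₁, a ∈ M) ∧
      ∀ a ∈ l₂, a ∈ M :=
  ⟨l.take x, l.drop x, (List.take_append_drop x l).symm, by simp [hl], by simp [hl],
    fun a ha => hM a (List.mem_of_mem_take ha), fun a ha => hM a (List.mem_of_mem_drop ha)⟩

theorem esymmCost_add_le_sum (r x y : ℕ) :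
    esymmCost M r (x + y) ≤
      ∑ p ∈ Finset.HasAntidiagonal.antidiagonal r, esymmCost M p.1 x * esymmCost M p.2 y := by
  refine esymmCost_le fun l hl hM => ?_
  obtain ⟨l₁, l₂, rfl, rfl, rfl, hM1, hM2⟩ := exists_take_drop M hl hM
  rw [listEsymm_append]
  refine IsSumOfProducts.sum _ fun p hp => ?_
  have := (isSumOfProducts_esymmCost M p.1 hM1).mul (isSumOfProducts_esymmCost M p.2 hM2)
  rwa [Finset.HasAntidiagonal.mem_antidiagonal.1 hp] at this

theorem sum_range_two_mul_add_one (h : ℕ → ℕ) (d : ℕ) :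
    ∑ i ∈ Finset.range (2 * d + 1), h i =
      ∑ i ∈ Finset.range (d + 1), h (2 * i) + ∑ i ∈ Finset.range d, h (2 * i + 1) := by
  induction d with
  | zero => simp
  | succ d ih =>
    rw [show 2 * (d + 1) + 1 = 2 * d + 1 + 1 + 1 by ring, Finset.sum_range_succ,
      Finset.sum_range_succ, ih, Finset.sum_range_succ _ (d + 1), Finset.sum_range_succ _ d,
      Finset.sum_range_succ _ d, show 2 * (d + 1) = 2 * d + 1 + 1 by ring]
    ring

theorem sum_esymmCost_odd_le (d x y : ℕ) :
    ∑ i ∈ Finset.range (d + 1),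
      esymmCost M (2 * i + 1) x * esymmCost M (2 * (d + 1) - (2 * i + 1)) y ≤
      (x + y).choose d := by
  rw [Nat.add_choose_eq, Finset.Nat.sum_antidiagonal_eq_sum_range_succ
    (fun i j => x.choose i * y.choose j)]
  refine Finset.sum_le_sum fun i hi => Nat.mul_le_mul ?_ ?_
  · simpa [show (2 * i + 1) / 2 = i by omega] using esymmCost_le_choose M (2 * i + 1) x
  · have hi := Finset.mem_range.1 hi
    simpa [show (2 * (d + 1) - (2 * i + 1)) / 2 = d - i by omega] using
      esymmCost_le_choose M (2 * (d + 1) - (2 * i + 1)) y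

theorem esymmCost_even_add_le (d x y : ℕ) :
    esymmCost M (2 * (d + 1)) (x + y) ≤
      ∑ i ∈ Finset.range (d + 2), esymmCost M (2 * i) x * esymmCost M (2 * (d + 1 - i)) y +
        (x + y).choose d := by
  refine (esymmCost_add_le_sum M _ x y).trans ?_
  rw [Finset.Nat.sum_antidiagonal_eq_sum_range_succ
    (fun i j => esymmCost M i x * esymmCost M j y), sum_range_two_mul_add_one]
  simp only [Nat.mul_sub]
  exact Nat.add_le_add_left (sum_esymmCost_odd_le M d x y) _

theorem esymmCost_four_add_le (x y : ℕ) :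
    ∃ k, 15 * k ≤ 14 * (x * y) ∧
      esymmCost M 4 (x + y) ≤ esymmCost M 4 x + esymmCost M 4 y + k + (x + y) := by
  obtain ⟨k, hk, h⟩ := exists_isSumOfProducts_pair (M := M) x y
  have hle : esymmCost M 4 (x + y) ≤
      esymmCost M 0 x * esymmCost M 4 y + esymmCost M 1 x * esymmCost M 3 y + k
        + esymmCost M 3 x * esymmCost M 1 y + esymmCost M 4 x * esymmCost M 0 y := by
    refine esymmCost_le fun l hl hM => ?_
    obtain ⟨l₁, l₂, rfl, rfl, rfl, hM1, hM2⟩ := exists_take_drop M hl hM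
    have c := fun i j => (isSumOfProducts_esymmCost M i hM1).mul (isSumOfProducts_esymmCost M j hM2)
    have e : listEsymm (l₁ ++ l₂) 4 = listEsymm l₁ 0 * listEsymm l₂ 4
        + listEsymm l₁ 1 * listEsymm l₂ 3 + listEsymm l₁ 2 * listEsymm l₂ 2
        + listEsymm l₁ 3 * listEsymm l₂ 1 + listEsymm l₁ 4 * listEsymm l₂ 0 := by
      rw [listEsymm_append, Finset.Nat.sum_antidiagonal_eq_sum_range_succ
        (fun i j => listEsymm l₁ i * listEsymm l₂ j)]
      simp [Finset.sum_range_succ]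
    rw [e]
    exact ((((c 0 4).add (c 1 3)).add (h l₁ l₂ rfl rfl hM1 hM2)).add (c 3 1)).add (c 4 0)
  refine ⟨k, hk, hle.trans ?_⟩
  have h0 : ∀ n, esymmCost M 0 n ≤ 1 := fun n => by simpa using esymmCost_le_choose M 0 n
  have h1 : ∀ n, esymmCost M 1 n ≤ 1 := fun n => by simpa using esymmCost_le_choose M 1 n
  have h3 : ∀ n, esymmCost M 3 n ≤ n := fun n => by simpa using esymmCost_le_choose M 3 n
  have i1 := Nat.mul_le_mul_right (esymmCost M 4 y) (h0 x)
  have i2 := Nat.mul_le_mul (h1 x) (h3 y)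
  have i3 := Nat.mul_le_mul (h3 x) (h1 y)
  have i4 := Nat.mul_le_mul_left (esymmCost M 4 x) (h0 y)
  omega

end Cost

section Extraction

/-- The functions `S ↦ ∑ v ∈ S, a v` on finite sets of vertices. -/
def linearForms : AddSubmonoid (Finset ℕ → ℕ) where
  carrier := {φ | ∃ a : ℕ → ℕ, ∀ S, φ S = ∑ v ∈ S, a v}
  zero_mem' := ⟨0, by simp⟩
  add_mem' := by
    rintro _ _ ⟨a, ha⟩ ⟨b, hb⟩
    exact ⟨a + b, fun S => by simp [ha, hb, Finset.sum_add_distrib]⟩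

theorem listEsymm_apply {α : Type*} (l : List (α → ℕ)) (r : ℕ) (s : α) :
    listEsymm l r s = listEsymm (l.map fun φ => φ s) r := by
  induction l generalizing r with
  | nil => cases r <;> simp
  | cons a l ih =>
    cases r with
    | zero => simp
    | succ r => simp [ih]

theorem listEsymm_eq_choose (l : List ℕ) (hl : ∀ a ∈ l, a ≤ 1) (r : ℕ) :
    listEsymm l r = l.sum.choose r := by
  induction l generalizing r with
  | nil => cases r <;> simp
  | cons a l ih =>
    have ih' := ih fun b hb => hl b (by simp [hb])
    cases r with
    | zero => simp
    | succ r =>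
      rw [listEsymm_cons_succ, ih', ih']
      have ha : a ≤ 1 := hl a (by simp)
      interval_cases a
      · simp
      · rw [List.sum_cons, add_comm 1, Nat.choose_succ_succ]
        ring

theorem exists_coeffs_of_mem_linearForms (t : List (Finset ℕ → ℕ)) (ht : ∀ φ ∈ t, φ ∈ linearForms) :
    ∃ a : Fin t.length → ℕ → ℕ, ∀ S, t.prod S = ∏ i, ∑ v ∈ S, a i v := by
  induction t with
  | nil => exact ⟨fun _ => 0, by simp⟩
  | cons φ t ih =>
    obtain ⟨b, hb⟩ := ht φ (by simp)
    obtain ⟨a, ha⟩ := ih fun ψ hψ => ht ψ (by simp [hψ])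
    refine ⟨Fin.cons b a, fun S => ?_⟩
    rw [List.prod_cons, Pi.mul_apply, hb, ha]
    exact (Fin.prod_univ_succ fun i : Fin (t.length + 1) =>
      ∑ v ∈ S, (Fin.cons b a : Fin (t.length + 1) → ℕ → ℕ) i v).symm

theorem sum_map_filter_apply {α : Type*} (L : List (List (α → ℕ))) (P : List (α → ℕ) → Prop)
    [DecidablePred P] (s : α) (h : ∀ t, ¬P t → t.prod s = 0) :
    ((L.filter P).map List.prod).sum s = (L.map List.prod).sum s := by
  induction L with
  | nil => rfl
  | cons t L ih =>
    by_cases hP : P t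
    · simp [hP, ih]
    · simp [hP, ih, h t hP]

theorem sum_indicator_apply {n : ℕ} {S : Finset ℕ} (hS : S ⊆ Finset.range n) :
    ((List.range n).map fun v => if v ∈ S then 1 else 0).sum = S.card := by
  change ∑ v ∈ Finset.range n, (if v ∈ S then 1 else 0) = _
  rw [Finset.sum_ite_mem, Finset.inter_eq_right.2 hS]
  simp

open Classical in
theorem exists_linear_decomposition (r n : ℕ) :
    ∃ k ≤ esymmCost linearForms r n, ∃ a : Fin k → Fin r → ℕ → ℕ,
      (∀ j, ∃ S ⊆ Finset.range n, ∏ i, ∑ v ∈ S, a j i v ≠ 0) ∧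
      ∀ S ⊆ Finset.range n, S.card.choose r = ∑ j, ∏ i, ∑ v ∈ S, a j i v := by
  let l : List (Finset ℕ → ℕ) := (List.range n).map fun v S => if v ∈ S then 1 else 0
  have hM : ∀ φ ∈ l, φ ∈ linearForms := by
    intro φ hφ
    obtain ⟨v, -, rfl⟩ := List.mem_map.1 hφ
    exact ⟨fun w => if w = v then 1 else 0, fun S => by simp⟩
  obtain ⟨L, hL, hL', hsum⟩ := isSumOfProducts_esymmCost linearForms r hM
  rw [show l.length = n by simp [l]] at hL
  let P : List (Finset ℕ → ℕ) → Prop := fun t => ∃ S ⊆ Finset.range n, t.prod S ≠ 0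
  have hcoeff : ∀ j : Fin (L.filter P).length, ∃ a : Fin r → ℕ → ℕ,
      ∀ S, ((L.filter P).get j).prod S = ∏ i, ∑ v ∈ S, a i v := by
    intro j
    obtain ⟨hr, hm⟩ := hL' _ (List.mem_of_mem_filter (List.get_mem (L.filter P) j))
    obtain ⟨a, ha⟩ := exists_coeffs_of_mem_linearForms _ hm
    subst hr
    exact ⟨a, ha⟩
  choose a ha using hcoeff
  refine ⟨(L.filter P).length, (List.length_filter_le _ _).trans hL, a, fun j => ?_, fun S hS => ?_⟩
  · have := List.of_mem_filter (List.get_mem (L.filter P) j)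
    obtain ⟨S, hS, h⟩ := of_decide_eq_true this
    exact ⟨S, hS, ha j S ▸ h⟩
  · have h1 : listEsymm l r S = S.card.choose r := by
      rw [listEsymm_apply, listEsymm_eq_choose]
      · simp only [l, List.map_map, Function.comp_def, sum_indicator_apply hS]
      · intro b hb
        simp only [l, List.map_map, List.mem_map, Function.comp_def] at hb
        obtain ⟨v, -, rfl⟩ := hb
        split_ifs <;> simp
    rw [← h1, hsum, ← sum_map_filter_apply L P S fun t ht => by_contra fun h => ht ⟨S, hS, h⟩]
    simp only [← ha]
    rw [← Finset.sum_apply]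
    exact congrFun (Fin.sum_univ_fun_getElem (L.filter P) List.prod).symm S

theorem f_le_esymmCost (r n : ℕ) : f r n ≤ esymmCost linearForms r n := by
  obtain ⟨k, hk, a, hne, ha⟩ := exists_linear_decomposition r n
  refine le_trans (Nat.sInf_le ?_) hk
  have hpos : ∀ j i, ∃ v ∈ Finset.range n, a j i v ≠ 0 := by
    intro j i
    obtain ⟨S, hS, h⟩ := hne j
    obtain ⟨v, hv, h⟩ := Finset.exists_ne_zero_of_sum_ne_zero
      (Finset.prod_ne_zero_iff.1 h i (Finset.mem_univ i))
    exact ⟨v, hS hv, h⟩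
  have hzero : ∀ j, ∀ S ⊆ Finset.range n, S.card < r → ∏ i, ∑ v ∈ S, a j i v = 0 := by
    intro j S hS hc
    have := ha S hS
    rw [Nat.choose_eq_zero_of_lt hc] at this
    exact Finset.sum_eq_zero_iff.1 this.symm j (Finset.mem_univ j)
  choose w hw hwa using hpos
  have sum_pos : ∀ j i (S : Finset ℕ) v, v ∈ S → a j i v ≠ 0 → ∑ v ∈ S, a j i v ≠ 0 :=
    fun j i S v hv h0 h => h0 (Finset.sum_eq_zero_iff.1 h v hv)
  let B : Fin k → Block (Finset.range n) r := fun j =>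
    { parts := fun i => (Finset.range n).filter fun v => a j i v ≠ 0
      nonempty := fun i => ⟨w j i, by simpa using ⟨Finset.mem_range.1 (hw j i), hwa j i⟩⟩
      subset := fun i => Finset.filter_subset _ _
      disj := by
        intro i i' hii
        rw [Finset.disjoint_left]
        intro v hv hv'
        rw [Finset.mem_filter] at hv hv'
        let S : Finset ℕ := insert v (((Finset.univ.erase i).erase i').image (w j))
        have hS : S ⊆ Finset.range n := by
          intro x hx
          rcases Finset.mem_insert.1 hx with rfl | hx
          · exact hv.1
          · obtain ⟨i, -, rfl⟩ := Finset.mem_image.1 hx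
            exact hw j i
        have hc : S.card < r := by
          have h1 : ((Finset.univ.erase i).erase i').card = r - 1 - 1 := by
            rw [Finset.card_erase_of_mem (by simp [hii.symm]), Finset.card_erase_of_mem (by simp)]
            simp
          have h2 := Finset.card_insert_le v (((Finset.univ.erase i).erase i').image (w j))
          have h3 := Finset.card_image_le (s := (Finset.univ.erase i).erase i') (f := w j)
          have h4 := i.2
          have h5 := i'.2
          have h6 : (i : ℕ) ≠ i' := fun h => hii (Fin.ext h)
          simp only [S]
          omega
        refine absurd (hzero j S hS hc) (Finset.prod_ne_zero_iff.2 fun c _ => ?_)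
        by_cases h1 : c = i
        · exact sum_pos j c S v (by simp [S]) (h1 ▸ hv.2)
        · by_cases h2 : c = i'
          · exact sum_pos j c S v (by simp [S]) (h2 ▸ hv'.2)
          · refine sum_pos j c S (w j c) ?_ (hwa j c)
            exact Finset.mem_insert_of_mem (Finset.mem_image_of_mem _ (by simp [h1, h2])) }
  have mem_parts : ∀ j i v, v ∈ (B j).parts i ↔ v ∈ Finset.range n ∧ a j i v ≠ 0 :=
    fun j i v => Finset.mem_filter
  have edge_card : ∀ j X, X ∈ (B j).edges → X ⊆ Finset.range n ∧ X.card = r := by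
    rintro j X ⟨h1, h2⟩
    refine ⟨fun x hx => ?_, ?_⟩
    · obtain ⟨i, hi⟩ := h2 x hx
      exact (B j).subset i hi
    · have : X = Finset.univ.biUnion fun i => X ∩ (B j).parts i := by
        ext x
        simp only [Finset.mem_biUnion, Finset.mem_univ, true_and, Finset.mem_inter]
        exact ⟨fun hx => (h2 x hx).imp fun i hi => ⟨hx, hi⟩, fun ⟨i, hx, _⟩ => hx⟩
      rw [this, Finset.card_biUnion]
      · simp [h1]
      · intro i _ i' _ hii
        exact ((B j).disj i i' hii).mono Finset.inter_subset_right Finset.inter_subset_right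
  have edge_prod : ∀ j X, X ∈ (B j).edges → ∏ i, ∑ v ∈ X, a j i v ≠ 0 := by
    rintro j X ⟨h1, h2⟩
    refine Finset.prod_ne_zero_iff.2 fun i _ => ?_
    obtain ⟨x, hx⟩ := Finset.card_pos.1 (show 0 < (X ∩ (B j).parts i).card by rw [h1]; exact one_pos)
    rw [Finset.mem_inter, mem_parts] at hx
    exact sum_pos j i X x hx.1 hx.2.2
  refine ⟨B, ?_, ?_⟩
  · intro j j' hjj
    rw [Set.disjoint_left]
    intro X hX hX'
    obtain ⟨hXn, hXr⟩ := edge_card j X hX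
    have h := ha X hXn
    rw [hXr, Nat.choose_self] at h
    have h1 := Nat.pos_of_ne_zero (edge_prod j X hX)
    have h2 := Nat.pos_of_ne_zero (edge_prod j' X hX')
    have h3 := Finset.sum_le_sum_of_subset (f := fun j => ∏ i, ∑ v ∈ X, a j i v)
      (Finset.subset_univ {j, j'})
    rw [Finset.sum_pair hjj] at h3
    omega
  · ext X
    simp only [Set.mem_iUnion]
    refine ⟨fun ⟨j, hj⟩ => edge_card j X hj, fun ⟨hXn, hXr⟩ => ?_⟩
    have h := ha X hXn
    rw [hXr, Nat.choose_self] at h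
    obtain ⟨j, -, hj⟩ := Finset.exists_ne_zero_of_sum_ne_zero (h ▸ one_ne_zero)
    have hle : ∏ i, ∑ v ∈ X, a j i v ≤ 1 :=
      h ▸ Finset.single_le_sum (f := fun j => ∏ i, ∑ v ∈ X, a j i v) (fun _ _ => Nat.zero_le _)
        (Finset.mem_univ j)
    have h1 : ∀ i, ∑ v ∈ X, a j i v = 1 := by
      intro i
      have : ∏ i, ∑ v ∈ X, a j i v = 1 := by omega
      exact Nat.dvd_one.1 (this ▸ Finset.dvd_prod_of_mem _ (Finset.mem_univ i))
    have hcard : ∀ i, (X ∩ (B j).parts i).card = 1 := by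
      intro i
      have hle : (X ∩ (B j).parts i).card ≤ 1 := by
        rw [← h1 i, Finset.card_eq_sum_ones]
        refine (Finset.sum_le_sum (g := a j i) fun v hv => ?_).trans
          (Finset.sum_le_sum_of_subset Finset.inter_subset_left)
        rw [Finset.mem_inter, mem_parts] at hv
        exact Nat.pos_of_ne_zero hv.2.2
      have hpos : 0 < (X ∩ (B j).parts i).card := by
        obtain ⟨v, hv, hv0⟩ := Finset.exists_ne_zero_of_sum_ne_zero
          (show ∑ v ∈ X, a j i v ≠ 0 by rw [h1]; exact one_ne_zero)
        exact Finset.card_pos.2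
          ⟨v, Finset.mem_inter.2 ⟨hv, (mem_parts _ _ _).2 ⟨hXn hv, hv0⟩⟩⟩
      omega
    refine ⟨j, hcard, ?_⟩
    have hsub : (Finset.univ.biUnion fun i => X ∩ (B j).parts i) ⊆ X :=
      Finset.biUnion_subset.2 fun i _ => Finset.inter_subset_left
    have heq := Finset.eq_of_subset_of_card_le hsub (by
      rw [Finset.card_biUnion]
      · simp [hcard, hXr]
      · intro i _ i' _ hii
        exact ((B j).disj i i' hii).mono Finset.inter_subset_right Finset.inter_subset_right)
    intro x hx
    rw [← heq] at hx
    obtain ⟨i, -, hi⟩ := Finset.mem_biUnion.1 hx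
    exact ⟨i, (Finset.mem_inter.1 hi).2⟩

end Extraction

section Growth

variable {R : Type*} [CommSemiring R] (M : AddSubmonoid R)

theorem exists_halves {n : ℕ} (hn : 2 ≤ n) :
    ∃ x y : ℕ, x + y = n ∧ x ≤ y ∧ y ≤ x + 1 ∧ y < n ∧ Nat.clog 2 n = Nat.clog 2 y + 1 :=
  ⟨n / 2, (n + 1) / 2, by omega, by omega, by omega, by omega, Nat.clog_of_two_le one_lt_two hn⟩

theorem esymmCost_le_pow_div (d n : ℕ) :
    (esymmCost M (2 * d) n : ℝ) ≤ (n : ℝ) ^ d / d.factorial := by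
  refine le_trans (Nat.cast_le.2 (esymmCost_le_choose M (2 * d) n)) ?_
  rw [Nat.mul_div_cancel_left d two_pos]
  exact Nat.choose_le_pow_div d n

theorem esymmCost_four_le {n : ℕ} (hn : 2 ≤ n) :
    (esymmCost M 4 n : ℝ) ≤ 14 / 15 * (n : ℝ) ^ 2 / 2 + n * ((Nat.clog 2 n : ℝ) - 1) := by
  induction n using Nat.strong_induction_on with
  | _ n ih =>
    rcases Nat.lt_or_ge n 4 with h4 | h4
    · have hb := esymmCost_le_choose M 4 n
      have hc : (1 : ℝ) ≤ Nat.clog 2 n := by exact_mod_cast Nat.clog_pos one_lt_two hn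
      interval_cases n
      · have hb : (esymmCost M 4 2 : ℝ) ≤ 1 := by exact_mod_cast hb
        push_cast
        linarith
      · have hb : (esymmCost M 4 3 : ℝ) ≤ 3 := by exact_mod_cast hb
        push_cast
        linarith
    · obtain ⟨x, y, rfl, hxy, hyx, hyn, hc⟩ := exists_halves hn
      have hcy : Nat.clog 2 x ≤ Nat.clog 2 y := Nat.clog_mono_right 2 hxy
      have hX := ih x (by omega) (by omega)
      have hY := ih y hyn (by omega)
      obtain ⟨k, hk, h⟩ := esymmCost_four_add_le M x y
      have hk' : 15 * (k : ℝ) ≤ 14 * (x * y) := by exact_mod_cast hk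
      have h' : (esymmCost M 4 (x + y) : ℝ) ≤ esymmCost M 4 x + esymmCost M 4 y + k + (x + y) := by
        exact_mod_cast h
      have hm : (x : ℝ) * Nat.clog 2 x ≤ x * Nat.clog 2 y := by gcongr
      rw [hc]
      push_cast
      linarith

theorem esymmCost_six_le {n : ℕ} (hn : 2 ≤ n) :
    (esymmCost M 6 n : ℝ) ≤ 14 / 15 * (n : ℝ) ^ 3 / 6 + n ^ 2 * ((Nat.clog 2 n : ℝ) - 1) := by
  induction n using Nat.strong_induction_on with
  | _ n ih =>
    rcases Nat.lt_or_ge n 4 with h4 | h4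
    · have hb := esymmCost_le_choose M 6 n
      have hc : (1 : ℝ) ≤ Nat.clog 2 n := by exact_mod_cast Nat.clog_pos one_lt_two hn
      interval_cases n
      · have hb : (esymmCost M 6 2 : ℝ) ≤ 0 := by exact_mod_cast hb
        push_cast
        linarith
      · have hb : (esymmCost M 6 3 : ℝ) ≤ 1 := by exact_mod_cast hb
        push_cast
        linarith
    · obtain ⟨x, y, rfl, hxy, hyx, hyn, hc⟩ := exists_halves hn
      have hcy : Nat.clog 2 x ≤ Nat.clog 2 y := Nat.clog_mono_right 2 hxy
      have hX := ih x (by omega) (by omega)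
      have hY := ih y hyn (by omega)
      have hX4 := esymmCost_four_le M (n := x) (by omega)
      have hY4 := esymmCost_four_le M (n := y) (by omega)
      have hX2 := esymmCost_le_pow_div M 1 x
      have hY2 := esymmCost_le_pow_div M 1 y
      have hX0 := esymmCost_le_pow_div M 0 x
      have hY0 := esymmCost_le_pow_div M 0 y
      have hC := Nat.choose_le_pow_div (α := ℝ) 2 (x + y)
      have h : (esymmCost M 6 (x + y) : ℝ) ≤ _ := Nat.cast_le.2 (esymmCost_even_add_le M 2 x y)
      norm_num [Finset.sum_range_succ, -Nat.cast_le, -Nat.cast_le_one] at h hX2 hY2 hX0 hY0 hC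
      have hm : (Nat.clog 2 x : ℝ) ≤ Nat.clog 2 y := by exact_mod_cast hcy
      have i0 : (esymmCost M 0 x : ℝ) * esymmCost M 6 y ≤ 1 * esymmCost M 6 y := by
        gcongr
      have i1 : (esymmCost M 2 x : ℝ) * esymmCost M 4 y ≤
          x * (14 / 15 * (y : ℝ) ^ 2 / 2 + y * ((Nat.clog 2 y : ℝ) - 1)) := by gcongr
      have i2 : (esymmCost M 4 x : ℝ) * esymmCost M 2 y ≤
          (14 / 15 * (x : ℝ) ^ 2 / 2 + x * ((Nat.clog 2 y : ℝ) - 1)) * y := by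
        refine mul_le_mul (hX4.trans ?_) hY2 (Nat.cast_nonneg _) ?_
        · gcongr
        · exact (Nat.cast_nonneg _).trans (hX4.trans (by gcongr))
      have i3 : (esymmCost M 6 x : ℝ) * esymmCost M 0 y ≤ esymmCost M 6 x * 1 := by gcongr
      have i4 : (x : ℝ) ^ 2 * ((Nat.clog 2 x : ℝ) - 1) ≤ x ^ 2 * ((Nat.clog 2 y : ℝ) - 1) := by
        gcongr
      have i5 : (0 : ℝ) ≤ ((x : ℝ) + y) ^ 2 := by positivity
      rw [hc]
      push_cast
      linarith

theorem clog_sub_one_le_logb {n : ℕ} (hn : 2 ≤ n) : (Nat.clog 2 n : ℝ) - 1 ≤ Real.logb 2 n := by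
  rw [Real.le_logb_iff_rpow_le one_lt_two (by positivity)]
  have h := (Nat.pow_pred_clog_lt_self one_lt_two hn).le
  have hc : 1 ≤ Nat.clog 2 n := Nat.clog_pos one_lt_two hn
  rw [show (Nat.clog 2 n : ℝ) - 1 = ((Nat.clog 2 n - 1 : ℕ) : ℝ) by push_cast [hc]; ring,
    Real.rpow_natCast]
  exact_mod_cast h

/-- The growth factor `(14 / 15) ^ (1 / 3)` of the leading coefficients. -/
noncomputable def growthBase : ℝ := (14 / 15 : ℝ) ^ (1 / 3 : ℝ)

theorem growthBase_pow_three : growthBase ^ 3 = 14 / 15 := by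
  rw [growthBase, ← Real.rpow_natCast, ← Real.rpow_mul (by norm_num)]
  norm_num

theorem growthBase_pos : 0 < growthBase := Real.rpow_pos_of_pos (by norm_num) _

theorem growthBase_lt_one : growthBase < 1 := Real.rpow_lt_one (by norm_num) (by norm_num) (by norm_num)

theorem lt_growthBase : 0.97 < growthBase :=
  lt_of_pow_lt_pow_left₀ 3 growthBase_pos.le (by rw [growthBase_pow_three]; norm_num)

theorem growthBase_pow (d : ℕ) : growthBase ^ d = (14 / 15 : ℝ) ^ ((d : ℝ) / 3) := by
  rw [growthBase, ← Real.rpow_natCast, ← Real.rpow_mul (by norm_num)]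
  ring_nf

/-- The leading coefficient of the bound for `esymmCost M (2 * d)`, relative to `n ^ d / d!`. -/
noncomputable def leadCoeff : ℕ → ℝ
  | 0 => 1
  | 1 => 1
  | 2 => growthBase ^ 3
  | d + 3 => growthBase ^ (d + 3)

theorem leadCoeff_nonneg (d : ℕ) : 0 ≤ leadCoeff d := by
  have := growthBase_pos
  unfold leadCoeff
  split <;> positivity

theorem leadCoeff_le_one (d : ℕ) : leadCoeff d ≤ 1 := by
  have h := growthBase_pos.le
  have h' := growthBase_lt_one.le
  unfold leadCoeff
  split
  · rfl
  · rfl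
  · exact pow_le_one₀ h h'
  · exact pow_le_one₀ h h'

theorem leadCoeff_of_three_le {d : ℕ} (hd : 3 ≤ d) : leadCoeff d = growthBase ^ d := by
  obtain ⟨k, rfl⟩ := Nat.exists_eq_add_of_le' hd
  rfl

theorem pow_add_pow_le_of_balanced {b x y : ℝ} (hb : 1.1 ≤ b) (hx : 0 < x) (hy : 0 < y)
    (hxy : x ≤ 1.03 * y) (hyx : y ≤ 1.03 * x) (k : ℕ) :
    x ^ (k + 2) + y ^ (k + 2) ≤ b * (x * y) * (x ^ k + y ^ k) := by
  have hp := mul_pos hx hy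
  have h1 : x ^ 2 ≤ b * (x * y) := by nlinarith
  have h2 : y ^ 2 ≤ b * (x * y) := by nlinarith
  have h3 := mul_le_mul_of_nonneg_left h1 (pow_nonneg hx.le k)
  have h4 := mul_le_mul_of_nonneg_left h2 (pow_nonneg hy.le k)
  rw [pow_add, pow_add]
  linarith

theorem sum_leadCoeff_four_le {x y : ℝ} (hx : 0 < x) (hy : 0 < y)
    (hxy : x ≤ 1.03 * y) (hyx : y ≤ 1.03 * x) :
    ∑ i ∈ Finset.range (4 + 1),
      leadCoeff i * leadCoeff (4 - i) * (x ^ i * y ^ (4 - i) * (Nat.choose 4 i : ℝ)) ≤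
      growthBase ^ 4 * (x + y) ^ 4 := by
  have hb := lt_growthBase
  have hb0 := growthBase_pos
  have hb1 := growthBase_lt_one
  simp [Finset.sum_range_succ, leadCoeff, Nat.choose]
  have h := pow_add_pow_le_of_balanced (b := 6 * growthBase * (1 + growthBase) / 8) (by nlinarith)
    hx hy hxy hyx 0
  have h1 := mul_le_mul_of_nonneg_left h
    (show 0 ≤ 4 * growthBase ^ 3 * (1 - growthBase) * (x * y) by
      have : 0 ≤ 1 - growthBase := by linarith
      positivity)
  nlinarith [h1]

theorem sum_range_add_six (g : ℕ → ℝ) (k : ℕ) :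
    ∑ i ∈ Finset.range (k + 5 + 1), g i = g 0 + g 1 + g 2 + ∑ i ∈ Finset.range k, g (i + 3) +
      g (k + 3) + g (k + 4) + g (k + 5) := by
  rw [Finset.sum_range_succ, Finset.sum_range_succ, Finset.sum_range_succ, Finset.sum_range_succ',
    Finset.sum_range_succ', Finset.sum_range_succ']
  ring

theorem sum_leadCoeff_le {d : ℕ} (hd : 4 ≤ d) {x y : ℝ} (hx : 0 < x) (hy : 0 < y)
    (hxy : x ≤ 1.03 * y) (hyx : y ≤ 1.03 * x) :
    ∑ i ∈ Finset.range (d + 1),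
      leadCoeff i * leadCoeff (d - i) * (x ^ i * y ^ (d - i) * (d.choose i : ℝ)) ≤
      growthBase ^ d * (x + y) ^ d := by
  rcases hd.eq_or_lt with rfl | hd
  · exact sum_leadCoeff_four_le hx hy hxy hyx
  obtain ⟨k, rfl⟩ := Nat.exists_eq_add_of_le' hd
  have hb := lt_growthBase
  have hb0 := growthBase_pos
  have hb1 := growthBase_lt_one
  have hmid : ∀ i ∈ Finset.range k, leadCoeff (i + 3) * leadCoeff (k + 5 - (i + 3)) *
      (x ^ (i + 3) * y ^ (k + 5 - (i + 3)) * ((k + 5).choose (i + 3) : ℝ)) =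
      growthBase ^ (k + 5) *
        (x ^ (i + 3) * y ^ (k + 5 - (i + 3)) * ((k + 5).choose (i + 3) : ℝ)) := by
    intro i hi
    have hi := Finset.mem_range.1 hi
    rw [leadCoeff_of_three_le (by omega), leadCoeff_of_three_le (by omega), ← pow_add]
    congr 2
    omega
  have c2 : ((k + 5).choose 2 : ℝ) = (k + 5) * (k + 4) / 2 := by
    rw [Nat.cast_choose_two]
    push_cast
    ring
  have c3 : (k + 5).choose (k + 3) = (k + 5).choose 2 := Nat.choose_symm_of_eq_add (by ring)
  have c4 : (k + 5).choose (k + 4) = k + 5 := by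
    rw [Nat.choose_symm_of_eq_add (show k + 5 = k + 4 + 1 by ring), Nat.choose_one_right]
  have h := pow_add_pow_le_of_balanced (b := (k + 4) * growthBase / 2)
    (by nlinarith [mul_nonneg (Nat.cast_nonneg (α := ℝ) k) hb0.le]) hx hy hxy hyx (k + 1)
  have h1 := mul_le_mul_of_nonneg_left h
    (show 0 ≤ (k + 5) * growthBase ^ (k + 4) * (1 - growthBase) * (x * y) by
      have : 0 ≤ 1 - growthBase := by linarith
      positivity)
  rw [add_pow, Finset.mul_sum, sum_range_add_six, sum_range_add_six, Finset.sum_congr rfl hmid,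
    c2, c3, c4, c2]
  simp only [leadCoeff, Nat.sub_zero, Nat.sub_self, Nat.choose_zero_right, Nat.choose_one_right,
    Nat.choose_self, show k + 5 - 1 = k + 4 by omega, show k + 5 - 2 = k + 3 by omega,
    show k + 5 - (k + 3) = 2 by omega, show k + 5 - (k + 4) = 1 by omega]
  push_cast
  linear_combination h1

end Growth

section MainInduction

variable {R : Type*} [CommSemiring R] (M : AddSubmonoid R)

/-- The lower order term of the bound for `esymmCost M (2 * d)`. -/
noncomputable def logError (d n : ℕ) : ℝ :=
  if d ≤ 1 then 0 else (n : ℝ) ^ (d - 1) * Real.logb 2 n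

theorem logb_two_natCast_nonneg (n : ℕ) : 0 ≤ Real.logb 2 (n : ℝ) :=
  div_nonneg (Real.log_natCast_nonneg n) (Real.log_nonneg one_le_two)

theorem logError_nonneg (d n : ℕ) : 0 ≤ logError d n := by
  have := logb_two_natCast_nonneg n
  unfold logError
  split_ifs <;> positivity

theorem logError_mul_pow_le {i j x y z n : ℕ} (hx : x ≤ y) (hz : z ≤ y) (hn : y ≤ n) :
    logError i x * (z : ℝ) ^ j ≤ (y : ℝ) ^ (i + j - 1) * Real.logb 2 n := by
  have hl := logb_two_natCast_nonneg n
  have hx' : (x : ℝ) ≤ y := Nat.cast_le.2 hx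
  have hz' : (z : ℝ) ≤ y := Nat.cast_le.2 hz
  unfold logError
  split_ifs with hi
  · rw [zero_mul]
    positivity
  · have hlog : Real.logb 2 x ≤ Real.logb 2 n := by
      rcases Nat.eq_zero_or_pos x with rfl | h0
      · simpa using hl
      · exact Real.logb_le_logb_of_le one_lt_two (by positivity) (Nat.cast_le.2 (hx.trans hn))
    rw [show i + j - 1 = i - 1 + j by omega, pow_add]
    calc (x : ℝ) ^ (i - 1) * Real.logb 2 x * (z : ℝ) ^ j
        ≤ (y : ℝ) ^ (i - 1) * Real.logb 2 n * (y : ℝ) ^ j := by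
          have := logb_two_natCast_nonneg x
          gcongr
      _ = _ := by ring

theorem sum_inv_factorial_le (d : ℕ) :
    ∑ i ∈ Finset.range d, (1 : ℝ) / i.factorial ≤ 3 := by
  have h := Real.sum_le_exp_of_nonneg zero_le_one d
  simp only [one_pow] at h
  linarith [Real.exp_one_lt_d9]

theorem esymmCost_small_le {d : ℕ} (hd : d < 4) (n : ℕ) :
    (esymmCost M (2 * d) n : ℝ) ≤ leadCoeff d * (n : ℝ) ^ d / d.factorial + logError d n := by
  rcases Nat.lt_or_ge n 2 with hn | hn
  · refine le_trans (Nat.cast_le.2 (esymmCost_le_choose M (2 * d) n)) ?_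
    interval_cases n <;> interval_cases d <;>
      norm_num [leadCoeff, logError, Nat.choose] <;>
      linarith [growthBase_pow_three]
  · have hl := clog_sub_one_le_logb hn
    interval_cases d
    · simpa [leadCoeff, logError] using esymmCost_le_pow_div M 0 n
    · simpa [leadCoeff, logError] using esymmCost_le_pow_div M 1 n
    · refine (esymmCost_four_le M hn).trans ?_
      norm_num [leadCoeff, logError, growthBase_pow_three]
      gcongr
    · refine (esymmCost_six_le M hn).trans ?_
      norm_num [leadCoeff, logError, growthBase_pow_three, Nat.factorial]
      gcongr

theorem mul_le_mul_add_of_le_add {F G A E B E' U V : ℝ} (hF0 : 0 ≤ F) (hB0 : 0 ≤ B) (hE0 : 0 ≤ E)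
    (hE0' : 0 ≤ E')
    (hF : F ≤ A + E) (hFU : F ≤ U) (hG : G ≤ B + E') (hBV : B ≤ V) :
    F * G ≤ A * B + E * V + U * E' := by
  have h1 := mul_le_mul_of_nonneg_left hG hF0
  have h2 := mul_le_mul_of_nonneg_right hF hB0
  have h3 := mul_le_mul_of_nonneg_right hFU hE0'
  have h4 := mul_le_mul_of_nonneg_left hBV hE0
  linarith

theorem leadCoeff_mul_pow_div_le (d n : ℕ) :
    leadCoeff d * (n : ℝ) ^ d / d.factorial ≤ (n : ℝ) ^ d / d.factorial := by
  gcongr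
  exact mul_le_of_le_one_left (by positivity) (leadCoeff_le_one d)

theorem large_of_factorial_mul_logb_lt {d n : ℕ} (hd : 4 ≤ d) (hn : 2 ≤ n)
    (h : (d.factorial : ℝ) * Real.logb 2 n < n) : 144 < n ∧ 6 ≤ Real.logb 2 n := by
  have hf : (24 : ℝ) ≤ d.factorial := by exact_mod_cast Nat.factorial_le hd
  have step : ∀ k : ℕ, 2 ^ k ≤ n → (k : ℝ) ≤ Real.logb 2 n ∧ 24 * k < n := by
    intro k hk
    have hk' : (k : ℝ) ≤ Real.logb 2 n := by
      rw [Real.le_logb_iff_rpow_le one_lt_two (by positivity), Real.rpow_natCast]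
      exact_mod_cast hk
    refine ⟨hk', ?_⟩
    have : (24 : ℝ) * k < n := by
      refine lt_of_le_of_lt ?_ h
      gcongr
    exact_mod_cast this
  have h1 := (step 1 hn).2
  have h4 := (step 4 (by omega)).2
  have h6 := step 6 (by omega)
  exact ⟨h6.2, h6.1⟩

theorem sum_leadCoeff_mul_le {d x y : ℕ} (hd : 4 ≤ d) (hx : 0 < x) (hxy : x ≤ y)
    (hyx : (y : ℝ) ≤ 1.03 * x) :
    ∑ i ∈ Finset.range (d + 1), leadCoeff i * (x : ℝ) ^ i / i.factorial *
      (leadCoeff (d - i) * (y : ℝ) ^ (d - i) / (d - i).factorial) ≤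
      growthBase ^ d * ((x + y : ℕ) : ℝ) ^ d / d.factorial := by
  have hx0 : (0 : ℝ) < x := Nat.cast_pos.2 hx
  have hxy' : (x : ℝ) ≤ y := Nat.cast_le.2 hxy
  have hmain := sum_leadCoeff_le hd hx0 (hx0.trans_le hxy') (by linarith) hyx
  rw [le_div_iff₀ (by positivity), Finset.sum_mul]
  push_cast
  refine le_trans (le_of_eq (Finset.sum_congr rfl fun i hi => ?_)) hmain
  have hi := Finset.mem_range.1 hi
  rw [Nat.cast_choose ℝ (show i ≤ d by omega)]
  field_simp

theorem sum_error_le {d x y n : ℕ} (hxy : x ≤ y) (hn : y ≤ n) :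
    ∑ i ∈ Finset.range (d + 1), (logError i x * ((y : ℝ) ^ (d - i) / (d - i).factorial) +
      (x : ℝ) ^ i / i.factorial * logError (d - i) y) ≤
      6 * ((y : ℝ) ^ (d - 1) * Real.logb 2 n) := by
  set T : ℝ := (y : ℝ) ^ (d - 1) * Real.logb 2 n
  have hT : 0 ≤ T := mul_nonneg (by positivity) (logb_two_natCast_nonneg n)
  have h1 : ∀ i ∈ Finset.range (d + 1),
      logError i x * ((y : ℝ) ^ (d - i) / (d - i).factorial) +
        (x : ℝ) ^ i / i.factorial * logError (d - i) y ≤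
      1 / (d - i).factorial * T + 1 / i.factorial * T := by
    intro i hi
    have hi := Finset.mem_range.1 hi
    have a1 := logError_mul_pow_le (i := i) (j := d - i) hxy le_rfl hn
    have a2 := logError_mul_pow_le (i := d - i) (j := i) le_rfl hxy hn
    rw [show i + (d - i) - 1 = d - 1 by omega] at a1
    rw [show d - i + i - 1 = d - 1 by omega] at a2
    refine add_le_add ?_ ?_
    · rw [← mul_div_assoc, one_div_mul_eq_div]
      gcongr
    · rw [div_mul_eq_mul_div, one_div_mul_eq_div, mul_comm]
      gcongr
  refine (Finset.sum_le_sum h1).trans ?_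
  rw [Finset.sum_add_distrib, ← Finset.sum_mul, ← Finset.sum_mul,
    Finset.sum_flip fun i => (1 : ℝ) / i.factorial]
  nlinarith [sum_inv_factorial_le (d + 1)]

theorem error_absorb {d n y : ℕ} (hd : 4 ≤ d) (hn : 144 < n) (hl : 6 ≤ Real.logb 2 n)
    (hy : 2 * y ≤ n + 1) :
    6 * ((y : ℝ) ^ (d - 1) * Real.logb 2 n) + (n.choose (d - 1) : ℝ) ≤
      (n : ℝ) ^ (d - 1) * Real.logb 2 n := by
  obtain ⟨k, rfl⟩ := Nat.exists_eq_add_of_le' hd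
  have hn' : (144 : ℝ) < n := by exact_mod_cast hn
  have hy' : 2 * (y : ℝ) ≤ n + 1 := by exact_mod_cast hy
  have hyn : (y : ℝ) ≤ 0.504 * n := by linarith
  have h1 : (y : ℝ) ^ (k + 3) ≤ 0.504 ^ 3 * (n : ℝ) ^ (k + 3) := by
    calc (y : ℝ) ^ (k + 3) ≤ (0.504 * n) ^ (k + 3) := by gcongr
      _ = 0.504 ^ k * (0.504 ^ 3 * (n : ℝ) ^ (k + 3)) := by rw [mul_pow]; ring
      _ ≤ 1 * (0.504 ^ 3 * (n : ℝ) ^ (k + 3)) := by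
        gcongr
        exact pow_le_one₀ (by norm_num) (by norm_num)
      _ = _ := one_mul _
  have h2 : (n.choose (k + 3) : ℝ) ≤ (n : ℝ) ^ (k + 3) / 6 := by
    refine (Nat.choose_le_pow_div (k + 3) n).trans ?_
    gcongr
    exact_mod_cast Nat.factorial_le (show 3 ≤ k + 3 by omega)
  have h3 := mul_le_mul_of_nonneg_right h1 (show 0 ≤ Real.logb 2 n by linarith)
  have h4 := mul_le_mul_of_nonneg_left hl (show 0 ≤ (n : ℝ) ^ (k + 3) by positivity)
  rw [show k + 4 - 1 = k + 3 by omega]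
  nlinarith

theorem esymmCost_even_le (d n : ℕ) :
    (esymmCost M (2 * d) n : ℝ) ≤ leadCoeff d * (n : ℝ) ^ d / d.factorial + logError d n := by
  induction n using Nat.strong_induction_on generalizing d with
  | _ n ih =>
    rcases Nat.lt_or_ge d 4 with hd | hd
    · exact esymmCost_small_le M hd n
    have hA0 : ∀ i m : ℕ, 0 ≤ leadCoeff i * (m : ℝ) ^ i / i.factorial := fun i m =>
      div_nonneg (mul_nonneg (leadCoeff_nonneg i) (by positivity)) (by positivity)
    rcases Nat.lt_or_ge n 2 with hn | hn
    · have h := esymmCost_le_choose M (2 * d) n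
      rw [Nat.choose_eq_zero_of_lt (by omega), Nat.le_zero] at h
      rw [h, Nat.cast_zero]
      exact add_nonneg (hA0 d n) (logError_nonneg d n)
    have hlE : logError d n = (n : ℝ) ^ (d - 1) * Real.logb 2 n := if_neg (by omega)
    rcases le_or_gt (n : ℝ) (d.factorial * Real.logb 2 n) with hsmall | hlarge
    · refine (esymmCost_le_pow_div M d n).trans ?_
      refine le_trans ?_ (le_add_of_nonneg_left (hA0 d n))
      rw [hlE, div_le_iff₀ (by positivity), ← pow_sub_one_mul (show d ≠ 0 by omega)]
      calc (n : ℝ) ^ (d - 1) * n ≤ (n : ℝ) ^ (d - 1) * (d.factorial * Real.logb 2 n) := by gcongr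
        _ = _ := by ring
    · obtain ⟨hn144, hl⟩ := large_of_factorial_mul_logb_lt hd hn hlarge
      obtain ⟨x, y, rfl, hxy, hyx, hyn, -⟩ := exists_halves hn
      have hyx' : (y : ℝ) ≤ 1.03 * x := by
        have h1 : (y : ℝ) ≤ x + 1 := by exact_mod_cast hyx
        have h2 : (72 : ℝ) ≤ x := by exact_mod_cast (show 72 ≤ x by omega)
        linarith
      have hrec := esymmCost_even_add_le M (d - 1) x y
      rw [show d - 1 + 1 = d by omega, show d - 1 + 2 = d + 1 by omega] at hrec
      have hrec' : (esymmCost M (2 * d) (x + y) : ℝ) ≤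
          ∑ i ∈ Finset.range (d + 1),
            (esymmCost M (2 * i) x : ℝ) * esymmCost M (2 * (d - i)) y +
              ((x + y).choose (d - 1) : ℕ) := by exact_mod_cast hrec
      have hprod : ∀ i ∈ Finset.range (d + 1),
          (esymmCost M (2 * i) x : ℝ) * esymmCost M (2 * (d - i)) y ≤
          leadCoeff i * (x : ℝ) ^ i / i.factorial *
            (leadCoeff (d - i) * (y : ℝ) ^ (d - i) / (d - i).factorial) +
          (logError i x * ((y : ℝ) ^ (d - i) / (d - i).factorial) +
            (x : ℝ) ^ i / i.factorial * logError (d - i) y) := fun i _ => by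
        rw [← add_assoc]
        exact mul_le_mul_add_of_le_add (Nat.cast_nonneg _) (hA0 _ _) (logError_nonneg _ _)
          (logError_nonneg _ _) (ih x (by omega) i) (esymmCost_le_pow_div M i x)
          (ih y hyn (d - i)) (leadCoeff_mul_pow_div_le _ _)
      have hsum := Finset.sum_le_sum hprod
      rw [Finset.sum_add_distrib] at hsum
      have e1 := sum_leadCoeff_mul_le hd (show 0 < x by omega) hxy hyx'
      have e2 := sum_error_le (d := d) hxy hyn.le
      have e3 := error_absorb (y := y) hd hn144 hl (by omega)
      rw [hlE, leadCoeff_of_three_le (by omega)]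
      linarith

end MainInduction

theorem f_even_upper_bound (m n : ℕ) (hm : 8 ≤ m) (hme : Even m) (hn : m ≤ n) :
    (f m n : ℝ) ≤ ((14 : ℝ) / 15) ^ ((m : ℝ) / 6) * (n : ℝ) ^ (m / 2) / (Nat.factorial (m / 2))
      + (n : ℝ) ^ (m / 2 - 1) * Real.logb 2 n := by
  obtain ⟨d, rfl⟩ := hme.exists_two_nsmul
  rw [smul_eq_mul] at *
  rw [Nat.mul_div_cancel_left d two_pos]
  have h := (Nat.cast_le (α := ℝ).2 (f_le_esymmCost (2 * d) n)).trans
    (esymmCost_even_le linearForms d n)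
  rw [leadCoeff_of_three_le (by omega), growthBase_pow, logError, if_neg (by omega)] at h
  rw [show ((2 * d : ℕ) : ℝ) / 6 = (d : ℝ) / 3 by push_cast; ring]
  exact h
end

section
/- Let a and b be even integers with a, b ≥ 6. For every ε > 0 there exists N such that for all disjoint finite sets S and T with |S| ≥ N and |T| ≥ N, the family ((S choose a) × (T choose b+1)) ∪ ((S choose a+1) × (T choose b)) can be exactly covered using at most [(14/15)^(b/6) + (14/15)^(a/6)] · (1 + ε) · C(|S|, a/2) · C(|T|, b/2) complete (a+b+1)-partite (a+b+1)-graphs on S ∪ T, where C(n, k) denotes the binomial coefficient. -/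
section BlockSum

variable {R : Type*} [CommSemiring R]

/-- `p` is a sum of at most `c` products of `r` elements of `L`. -/
def HasBlockSum (L : AddSubmonoid R) (r : ℕ) (c : ℝ) (p : R) : Prop :=
  ∃ s : Multiset (Multiset R), (Multiset.card s : ℝ) ≤ c ∧
    (∀ t ∈ s, Multiset.card t = r ∧ ∀ x ∈ t, x ∈ L) ∧ p = (s.map Multiset.prod).sum

namespace HasBlockSum

variable {L : AddSubmonoid R} {r r' : ℕ} {c c' : ℝ} {p p' : R}

theorem mono (h : HasBlockSum L r c p) (hc : c ≤ c') : HasBlockSum L r c' p := by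
  obtain ⟨s, h1, h2, h3⟩ := h
  exact ⟨s, h1.trans hc, h2, h3⟩

theorem nonneg (h : HasBlockSum L r c p) : 0 ≤ c := by
  obtain ⟨s, h1, -, -⟩ := h
  exact le_trans (by positivity) h1

theorem zero (hc : 0 ≤ c) : HasBlockSum L r c 0 := ⟨0, by simpa using hc, by simp, by simp⟩

theorem one : HasBlockSum L 0 1 1 := ⟨{0}, by simp, by simp, by simp⟩

theorem of_mem (hp : p ∈ L) : HasBlockSum L 1 1 p := ⟨{{p}}, by simp, by simpa using hp, by simp⟩

theorem add (h : HasBlockSum L r c p) (h' : HasBlockSum L r c' p') :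
    HasBlockSum L r (c + c') (p + p') := by
  obtain ⟨s, h1, h2, rfl⟩ := h
  obtain ⟨s', h1', h2', rfl⟩ := h'
  refine ⟨s + s', by push_cast [Multiset.card_add]; linarith, ?_, by simp⟩
  intro t ht
  rcases Multiset.mem_add.1 ht with ht | ht
  exacts [h2 t ht, h2' t ht]

theorem mul (h : HasBlockSum L r c p) (h' : HasBlockSum L r' c' p') :
    HasBlockSum L (r + r') (c * c') (p * p') := by
  have hc := h.nonneg
  obtain ⟨s, h1, h2, rfl⟩ := h
  obtain ⟨s', h1', h2', rfl⟩ := h'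
  refine ⟨(s ×ˢ s').map fun t => t.1 + t.2, ?_, ?_, ?_⟩
  · push_cast [Multiset.card_map, Multiset.card_product]
    gcongr
  · intro t ht
    obtain ⟨⟨u, v⟩, huv, rfl⟩ := Multiset.mem_map.1 ht
    obtain ⟨hu, hv⟩ := Multiset.mem_product.1 huv
    refine ⟨by simp [(h2 _ hu).1, (h2' _ hv).1], fun x hx => ?_⟩
    rcases Multiset.mem_add.1 hx with hx | hx
    exacts [(h2 _ hu).2 x hx, (h2' _ hv).2 x hx]
  · rw [Multiset.map_map, ← Multiset.sum_map_mul_right]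
    simp only [← Multiset.sum_map_mul_left]
    simp [SProd.sprod, Multiset.product, Multiset.map_bind, Multiset.sum_bind, Multiset.map_map,
      Function.comp_def]

theorem sum {ι : Type*} (s : Finset ι) {c : ι → ℝ} {p : ι → R}
    (h : ∀ i ∈ s, HasBlockSum L r (c i) (p i)) :
    HasBlockSum L r (∑ i ∈ s, c i) (∑ i ∈ s, p i) := by
  classical
  induction s using Finset.induction_on with
  | empty => simpa using zero le_rfl
  | insert a s ha ih =>
    rw [Finset.sum_insert ha, Finset.sum_insert ha]
    exact (h a (by simp)).add (ih fun i hi => h i (by simp [hi]))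

end HasBlockSum

theorem Multiset.esymm_zero' (M : Multiset R) : M.esymm 0 = 1 := by
  simp [Multiset.esymm, Multiset.powersetCard_zero_left]

theorem Multiset.zero_esymm_succ (n : ℕ) : (0 : Multiset R).esymm (n + 1) = 0 := by
  simp [Multiset.esymm, Multiset.powersetCard_zero_right]

theorem Multiset.esymm_cons_succ (x : R) (M : Multiset R) (n : ℕ) :
    (x ::ₘ M).esymm (n + 1) = M.esymm (n + 1) + x * M.esymm n := by
  simp [Multiset.esymm, Multiset.powersetCard_cons, Multiset.map_map,
    Multiset.sum_map_mul_left]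

theorem Multiset.esymm_singleton_two (x : R) : ({x} : Multiset R).esymm 2 = 0 := by
  rw [← Multiset.cons_zero, Multiset.esymm_cons_succ, Multiset.zero_esymm_succ,
    Multiset.zero_esymm_succ, mul_zero, add_zero]

theorem Multiset.esymm_one' (M : Multiset R) : M.esymm 1 = M.sum := by
  simp [Multiset.esymm, Multiset.powersetCard_one]

theorem Multiset.coeff_prod_one_add_C_mul_X (M : Multiset R) (n : ℕ) :
    ((M.map fun a => 1 + Polynomial.C a * Polynomial.X).prod).coeff n = M.esymm n := by
  induction M using Multiset.induction_on generalizing n with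
  | empty =>
    cases n with
    | zero => simp [Multiset.esymm_zero']
    | succ n => simp [Multiset.zero_esymm_succ, Polynomial.coeff_one]
  | cons a M ih =>
    rw [Multiset.map_cons, Multiset.prod_cons, add_mul, one_mul, mul_assoc, Polynomial.coeff_add,
      Polynomial.coeff_C_mul, ih]
    cases n with
    | zero => simp [Multiset.esymm_zero']
    | succ n => rw [Polynomial.coeff_X_mul, ih, Multiset.esymm_cons_succ]

theorem Multiset.esymm_add (A B : Multiset R) (n : ℕ) :
    (A + B).esymm n = ∑ i ∈ Finset.range (n + 1), A.esymm i * B.esymm (n - i) := by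
  simp only [← Multiset.coeff_prod_one_add_C_mul_X]
  rw [Multiset.map_add, Multiset.prod_add, Polynomial.coeff_mul,
    Finset.Nat.sum_antidiagonal_eq_sum_range_succ_mk]

theorem Multiset.esymm_add_replicate_zero (A : Multiset R) (k n : ℕ) :
    (A + Multiset.replicate k 0).esymm n = A.esymm n := by
  induction k with
  | zero => simp
  | succ k ih =>
    rw [Multiset.replicate_succ, Multiset.add_cons]
    cases n with
    | zero => simp [Multiset.esymm_zero']
    | succ n => rw [Multiset.esymm_cons_succ, ih, zero_mul, add_zero]

variable {L : AddSubmonoid R}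

/-- Cutting an ordered vertex set at the elements of even rank; `y` collects the vertices which
come after all of `M`. -/
theorem HasBlockSum.esymm_odd_aux (M : Multiset R) (hM : ∀ x ∈ M, x ∈ L) (d : ℕ) (y : R)
    (hy : y ∈ L) : HasBlockSum L (2 * d + 1) ((Multiset.card M).choose d)
      (M.esymm (2 * d + 1) + y * M.esymm (2 * d)) := by
  induction M using Multiset.induction_on generalizing d y with
  | empty =>
    cases d with
    | zero => simpa [Multiset.esymm_zero', Multiset.zero_esymm_succ] using HasBlockSum.of_mem hy
    | succ d =>
      rw [Multiset.zero_esymm_succ, show 2 * (d + 1) = 2 * d + 1 + 1 by ring,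
        Multiset.zero_esymm_succ, mul_zero, add_zero]
      exact HasBlockSum.zero (by positivity)
  | cons x M ih =>
    have hM' : ∀ x ∈ M, x ∈ L := fun z hz => hM z (Multiset.mem_cons_of_mem hz)
    have hx : x ∈ L := hM x (Multiset.mem_cons_self x M)
    have h1 := ih hM' d (x + y) (L.add_mem hx hy)
    cases d with
    | zero =>
      refine cast ?_ h1
      congr 1
      · simp
      · rw [Multiset.esymm_cons_succ]
        simp only [mul_zero, Multiset.esymm_zero']
        ring
    | succ d =>
      have h2 := ih hM' d 0 L.zero_mem
      have h3 := h1.add (((HasBlockSum.of_mem hy).mul (HasBlockSum.of_mem hx)).mul h2 |> fun h =>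
        (by convert h using 1; ring : HasBlockSum L (2 * (d + 1) + 1) _ _))
      refine cast ?_ h3
      congr 1
      · rw [Multiset.card_cons, Nat.choose_succ_succ]
        push_cast
        ring
      · rw [Multiset.esymm_cons_succ, show 2 * (d + 1) = 2 * d + 1 + 1 by ring,
          Multiset.esymm_cons_succ]
        ring

theorem HasBlockSum.esymm_odd (M : Multiset R) (hM : ∀ x ∈ M, x ∈ L) (d : ℕ) :
    HasBlockSum L (2 * d + 1) ((Multiset.card M).choose d) (M.esymm (2 * d + 1)) := by
  simpa using HasBlockSum.esymm_odd_aux M hM d 0 L.zero_mem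

theorem HasBlockSum.esymm_even (M : Multiset R) (hM : ∀ x ∈ M, x ∈ L) (d : ℕ) :
    HasBlockSum L (2 * d) ((Multiset.card M).choose d) (M.esymm (2 * d)) := by
  cases d with
  | zero => simpa [Multiset.esymm_zero'] using HasBlockSum.one
  | succ d =>
    induction M using Multiset.induction_on with
    | empty =>
      rw [show 2 * (d + 1) = 2 * d + 1 + 1 by ring, Multiset.zero_esymm_succ]
      exact HasBlockSum.zero (by positivity)
    | cons x M ih =>
      have hM' : ∀ x ∈ M, x ∈ L := fun z hz => hM z (Multiset.mem_cons_of_mem hz)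
      have h1 := (HasBlockSum.of_mem (hM x (Multiset.mem_cons_self x M))).mul
        (HasBlockSum.esymm_odd M hM' d)
      rw [show 1 + (2 * d + 1) = 2 * (d + 1) by ring] at h1
      refine cast ?_ ((ih hM').add h1)
      congr 1
      · rw [Multiset.card_cons, Nat.choose_succ_succ]
        push_cast
        ring
      · rw [show 2 * (d + 1) = 2 * d + 1 + 1 by ring, Multiset.esymm_cons_succ]

theorem HasBlockSum.esymm_le (M : Multiset R) (hM : ∀ x ∈ M, x ∈ L) (n : ℕ)
    (hn : Multiset.card M ≤ n) (i : ℕ) :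
    HasBlockSum L i ((n : ℝ) ^ (i / 2)) (M.esymm i) := by
  have key : ((Multiset.card M).choose (i / 2) : ℝ) ≤ (n : ℝ) ^ (i / 2) := by
    exact_mod_cast (Nat.choose_le_pow _ _).trans (Nat.pow_le_pow_left hn _)
  rcases Nat.even_or_odd' i with ⟨d, rfl | rfl⟩
  · refine (HasBlockSum.esymm_even M hM d).mono ?_
    simpa using key
  · refine (HasBlockSum.esymm_odd M hM d).mono ?_
    rw [show (2 * d + 1) / 2 = d by omega] at key ⊢
    exact key

/-- `E(K₄) × E(K₆)` is a disjoint union of `14` products of complete bipartite graphs. -/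
theorem HasBlockSum.esymm_two_four_mul_esymm_two_six {x0 x1 x2 x3 y0 y1 y2 y3 y4 y5 : R}
    (hx0 : x0 ∈ L) (hx1 : x1 ∈ L) (hx2 : x2 ∈ L) (hx3 : x3 ∈ L)
    (hy0 : y0 ∈ L) (hy1 : y1 ∈ L) (hy2 : y2 ∈ L) (hy3 : y3 ∈ L) (hy4 : y4 ∈ L) (hy5 : y5 ∈ L) :
    HasBlockSum L 4 14 (({x0, x1, x2, x3} : Multiset R).esymm 2 *
      ({y0, y1, y2, y3, y4, y5} : Multiset R).esymm 2) := by
  refine ⟨{{x0, x1, (y0 + y4), (y2 + y3 + y5)},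
    {x0, x2, (y0 + y3), (y1 + y2)},
    {(x0 + x2), (x1 + x3), (y0 + y5), y1},
    {(x0 + x2), (x1 + x3), y3, (y1 + y2 + y5)},
    {(x0 + x3), (x1 + x2), y2, (y1 + y5)},
    {(x0 + x3), (x1 + x2), y4, (y0 + y1)},
    {x2, x0, y5, (y1 + y3 + y4)},
    {x2, x1, (y2 + y4), (y0 + y1 + y5)},
    {(x2 + x3), (x0 + x1), y0, (y3 + y5)},
    {(x2 + x3), (x0 + x1), y4, (y2 + y3)},
    {x3, x0, (y2 + y4), (y0 + y1 + y5)},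
    {x3, x1, (y0 + y3), (y1 + y2)},
    {x3, x1, y5, (y1 + y3 + y4)},
    {x3, x2, (y0 + y4), (y2 + y3 + y5)}}, ?_, ?_, ?_⟩
  · simp only [Multiset.insert_eq_cons, Multiset.card_cons, Multiset.card_singleton]
    norm_num
  · simp only [Multiset.insert_eq_cons, Multiset.mem_cons, Multiset.mem_singleton,
      forall_eq_or_imp, forall_eq, Multiset.card_cons, Multiset.card_singleton]
    simp [L.add_mem, hx0, hx1, hx2, hx3, hy0, hy1, hy2, hy3, hy4, hy5]
  · have h4 : ({x0, x1, x2, x3} : Multiset R).esymm 2 =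
        x0 * x1 + x0 * x2 + x0 * x3 + x1 * x2 + x1 * x3 + x2 * x3 := by
      simp only [Multiset.insert_eq_cons, ← Multiset.cons_zero, Multiset.esymm_cons_succ,
        Multiset.zero_esymm_succ, Multiset.esymm_zero']
      ring
    have h6 : ({y0, y1, y2, y3, y4, y5} : Multiset R).esymm 2 =
        y0 * (y1 + y2 + y3 + y4 + y5) + y1 * (y2 + y3 + y4 + y5) + y2 * (y3 + y4 + y5) +
          y3 * (y4 + y5) + y4 * y5 := by
      simp only [Multiset.insert_eq_cons, ← Multiset.cons_zero, Multiset.esymm_cons_succ,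
        Multiset.zero_esymm_succ, Multiset.esymm_zero']
      ring
    rw [h4, h6]
    simp only [Multiset.insert_eq_cons, Multiset.map_cons, Multiset.map_singleton,
      Multiset.prod_cons, Multiset.prod_singleton, Multiset.sum_cons, Multiset.sum_singleton]
    ring

/-- The edges of a complete graph on at most `3 p` vertices are covered by `p` blow-ups of `K₄`. -/
theorem Multiset.esymm_two_eq_sum_four (p : ℕ) (M : Multiset R) (hM : ∀ x ∈ M, x ∈ L)
    (hp : Multiset.card M ≤ 3 * p) :
    ∃ x : Fin p → Fin 4 → R, (∀ j i, x j i ∈ L) ∧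
      M.esymm 2 = ∑ j, ({x j 0, x j 1, x j 2, x j 3} : Multiset R).esymm 2 := by
  wlog hp' : Multiset.card M = 3 * p generalizing M
  · obtain ⟨x, hx, h⟩ := this (M + Multiset.replicate (3 * p - Multiset.card M) 0)
      (fun x hx => by
        rcases Multiset.mem_add.1 hx with hx | hx
        · exact hM x hx
        · rw [Multiset.eq_of_mem_replicate hx]; exact L.zero_mem)
      (by simp; omega) (by simp; omega)
    exact ⟨x, hx, by rw [← h, Multiset.esymm_add_replicate_zero]⟩
  induction p generalizing M with
  | zero =>
    obtain rfl := Multiset.card_eq_zero.1 hp'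
    exact ⟨fun _ _ => 0, by simp, by simp [Multiset.zero_esymm_succ]⟩
  | succ p ih =>
    obtain ⟨x0, M, rfl, h0⟩ := Multiset.card_eq_succ_iff.1 hp'
    obtain ⟨x1, M, rfl, h1⟩ := Multiset.card_eq_succ_iff.1 h0
    obtain ⟨x2, M, rfl, h2⟩ := Multiset.card_eq_succ_iff.1 h1
    simp only [Multiset.mem_cons, forall_eq_or_imp] at hM
    obtain ⟨hx0, hx1, hx2, hM⟩ := hM
    simp only [Multiset.card_cons] at hp'
    obtain ⟨x, hx, e⟩ := ih M hM (by omega) (by omega)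
    refine ⟨Fin.cons ![x0, x1, x2, M.sum] x, ?_, ?_⟩
    · have hs := L.multiset_sum_mem M hM
      intro j i
      refine Fin.cases ?_ (fun j => ?_) j
      · fin_cases i <;> simp [hx0, hx1, hx2, hs]
      · simpa using hx j i
    · rw [Fin.sum_univ_succ]
      simp only [Fin.cons_zero, Fin.cons_succ, ← e]
      simp [Multiset.esymm_cons_succ, Multiset.esymm_one', Multiset.esymm_singleton_two]
      ring

/-- The edges of a complete graph on at most `5 p` vertices are covered by `p` blow-ups of `K₆`. -/
theorem Multiset.esymm_two_eq_sum_six (p : ℕ) (M : Multiset R) (hM : ∀ x ∈ M, x ∈ L)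
    (hp : Multiset.card M ≤ 5 * p) :
    ∃ x : Fin p → Fin 6 → R, (∀ j i, x j i ∈ L) ∧
      M.esymm 2 = ∑ j, ({x j 0, x j 1, x j 2, x j 3, x j 4, x j 5} : Multiset R).esymm 2 := by
  wlog hp' : Multiset.card M = 5 * p generalizing M
  · obtain ⟨x, hx, h⟩ := this (M + Multiset.replicate (5 * p - Multiset.card M) 0)
      (fun x hx => by
        rcases Multiset.mem_add.1 hx with hx | hx
        · exact hM x hx
        · rw [Multiset.eq_of_mem_replicate hx]; exact L.zero_mem)
      (by simp; omega) (by simp; omega)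
    exact ⟨x, hx, by rw [← h, Multiset.esymm_add_replicate_zero]⟩
  induction p generalizing M with
  | zero =>
    obtain rfl := Multiset.card_eq_zero.1 hp'
    exact ⟨fun _ _ => 0, by simp, by simp [Multiset.zero_esymm_succ]⟩
  | succ p ih =>
    obtain ⟨x0, M, rfl, h0⟩ := Multiset.card_eq_succ_iff.1 hp'
    obtain ⟨x1, M, rfl, h1⟩ := Multiset.card_eq_succ_iff.1 h0
    obtain ⟨x2, M, rfl, h2⟩ := Multiset.card_eq_succ_iff.1 h1
    obtain ⟨x3, M, rfl, h3⟩ := Multiset.card_eq_succ_iff.1 h2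
    obtain ⟨x4, M, rfl, h4⟩ := Multiset.card_eq_succ_iff.1 h3
    simp only [Multiset.mem_cons, forall_eq_or_imp] at hM
    obtain ⟨hx0, hx1, hx2, hx3, hx4, hM⟩ := hM
    simp only [Multiset.card_cons] at hp'
    obtain ⟨x, hx, e⟩ := ih M hM (by omega) (by omega)
    refine ⟨Fin.cons ![x0, x1, x2, x3, x4, M.sum] x, ?_, ?_⟩
    · have hs := L.multiset_sum_mem M hM
      intro j i
      refine Fin.cases ?_ (fun j => ?_) j
      · fin_cases i <;> simp [hx0, hx1, hx2, hx3, hx4, hs]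
      · simpa using hx j i
    · rw [Fin.sum_univ_succ]
      simp only [Fin.cons_zero, Fin.cons_succ, ← e]
      simp [Multiset.esymm_cons_succ, Multiset.esymm_one', Multiset.esymm_singleton_two]
      ring

theorem HasBlockSum.esymm_two_mul_esymm_two (M N : Multiset R) (hM : ∀ x ∈ M, x ∈ L)
    (hN : ∀ x ∈ N, x ∈ L) (m : ℕ) (hMm : Multiset.card M ≤ m) (hNm : Multiset.card N ≤ m) :
    HasBlockSum L 4 (14 / 15 * ((m : ℝ) + 5) ^ 2) (M.esymm 2 * N.esymm 2) := by
  obtain ⟨x, hx, ex⟩ := Multiset.esymm_two_eq_sum_four (m / 3 + 1) M hM (by omega)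
  obtain ⟨y, hy, ey⟩ := Multiset.esymm_two_eq_sum_six (m / 5 + 1) N hN (by omega)
  rw [ex, ey, Finset.sum_mul_sum, ← Finset.sum_product']
  refine (HasBlockSum.sum _ fun ij _ => HasBlockSum.esymm_two_four_mul_esymm_two_six
    (hx _ _) (hx _ _) (hx _ _) (hx _ _) (hy _ _) (hy _ _) (hy _ _) (hy _ _) (hy _ _)
    (hy _ _)).mono ?_
  have h3 : ((m / 3 : ℕ) : ℝ) ≤ m / 3 := Nat.cast_div_le
  have h5 : ((m / 5 : ℕ) : ℝ) ≤ m / 5 := Nat.cast_div_le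
  simp only [Finset.sum_const, Finset.card_product, Finset.card_univ, Fintype.card_fin,
    nsmul_eq_mul]
  push_cast
  have : (((m / 3 : ℕ) : ℝ) + 1) * (((m / 5 : ℕ) : ℝ) + 1) ≤ ((m : ℝ) / 3 + 1) * (m / 5 + 1) := by
    gcongr
  have hm : (0 : ℝ) ≤ m := by positivity
  nlinarith

/-- In the expansion of the elementary symmetric function of `A + B`, the terms whose degree in `A`
is neither `0` nor `2` are negligible. -/
theorem HasBlockSum.exists_esymm_add_eq (q : ℕ) (hq : 1 ≤ q) (A B : Multiset R)
    (hA : ∀ x ∈ A, x ∈ L) (hB : ∀ x ∈ B, x ∈ L) (hAq : Multiset.card A ≤ q)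
    (hBq : Multiset.card B ≤ q ^ 2) (d : ℕ) :
    ∃ p, HasBlockSum L (2 * (d + 1)) ((2 * d + 1) * (q : ℝ) ^ (2 * d)) p ∧
      (A + B).esymm (2 * (d + 1)) = B.esymm (2 * (d + 1)) + A.esymm 2 * B.esymm (2 * d) + p := by
  have hq' : (1 : ℝ) ≤ q := by exact_mod_cast hq
  have key : ∀ i j, i + j = 2 * (d + 1) → i / 2 + 2 * (j / 2) ≤ 2 * d →
      HasBlockSum L (2 * (d + 1)) ((q : ℝ) ^ (2 * d)) (A.esymm i * B.esymm j) := by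
    intro i j hij h
    have h1 := (HasBlockSum.esymm_le A hA q hAq i).mul (HasBlockSum.esymm_le B hB _ hBq j)
    rw [hij] at h1
    refine h1.mono ?_
    push_cast
    rw [← pow_mul, ← pow_add]
    exact pow_le_pow_right₀ hq' h
  refine ⟨A.esymm 1 * B.esymm (2 * d + 1) +
    ∑ i ∈ Finset.range (2 * d), A.esymm (i + 3) * B.esymm (2 * d - 1 - i), ?_, ?_⟩
  · have h1 := (key 1 (2 * d + 1) (by omega) (by omega)).add
      (HasBlockSum.sum (Finset.range (2 * d)) fun i hi =>
        key (i + 3) (2 * d - 1 - i) (by have := Finset.mem_range.1 hi; omega)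
          (by have := Finset.mem_range.1 hi; omega))
    refine h1.mono (le_of_eq ?_)
    simp
    ring
  · rw [Multiset.esymm_add, show 2 * (d + 1) + 1 = 2 * d + 1 + 1 + 1 by ring,
      Finset.sum_range_succ', Finset.sum_range_succ', Finset.sum_range_succ']
    have h2 : ∀ i ∈ Finset.range (2 * d),
        A.esymm (i + 1 + 1 + 1) * B.esymm (2 * (d + 1) - (i + 1 + 1 + 1)) =
          A.esymm (i + 3) * B.esymm (2 * d - 1 - i) := by
      intro i _
      congr 2
      omega
    rw [Finset.sum_congr rfl h2, Multiset.esymm_zero',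
      show 2 * (d + 1) - (0 + 1 + 1) = 2 * d by omega,
      show 2 * (d + 1) - (0 + 1) = 2 * d + 1 by omega, Nat.sub_zero]
    simp only [zero_add, one_add_one_eq_two]
    ring

theorem Multiset.exists_eq_add_of_card_le {α : Type*} (M : Multiset α) (m n : ℕ)
    (h : Multiset.card M ≤ m + n) :
    ∃ A B, M = A + B ∧ Multiset.card A ≤ m ∧ Multiset.card B ≤ n := by
  induction M using Quotient.inductionOn with
  | _ l =>
    refine ⟨(l.take m : Multiset α), (l.drop m : Multiset α), ?_, ?_, ?_⟩
    · simp
    · simp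
    · simp at h ⊢
      omega

/-- The bound obtained by cutting the vertex set into `K` chunks of size at most `q - 5`. -/
theorem HasBlockSum.esymm_even_of_chunks (q : ℕ) (hq : 5 ≤ q) (K : ℕ) (hK : K ≤ q)
    (M : Multiset R) (hM : ∀ x ∈ M, x ∈ L) (hMK : Multiset.card M ≤ K * (q - 5)) (d : ℕ) :
    HasBlockSum L (2 * d)
        (K.choose d * (14 / 15 : ℝ) ^ (d / 2) * q ^ d + d ^ 2 * K * q ^ (2 * d - 2))
        (M.esymm (2 * d)) ∧
      ∀ N : Multiset R, (∀ x ∈ N, x ∈ L) → Multiset.card N ≤ q - 5 →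
        HasBlockSum L (2 * (d + 1))
          (K.choose d * (14 / 15 : ℝ) ^ ((d + 1) / 2) * q ^ (d + 1) + d ^ 2 * K * q ^ (2 * d - 1))
          (N.esymm 2 * M.esymm (2 * d)) := by
  have hq1 : (1 : ℝ) ≤ q := by exact_mod_cast (by omega : 1 ≤ q)
  have two : ∀ N : Multiset R, (∀ x ∈ N, x ∈ L) → Multiset.card N ≤ q - 5 →
      HasBlockSum L 2 (q : ℝ) (N.esymm 2) := fun N hN hNq => by
    simpa using HasBlockSum.esymm_le N hN q (by omega) 2
  cases d with
  | zero =>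
    refine ⟨by simpa [Multiset.esymm_zero'] using HasBlockSum.one, fun N hN hNq => ?_⟩
    simpa [Multiset.esymm_zero'] using two N hN hNq
  | succ d =>
  induction K generalizing M d with
  | zero =>
    obtain rfl : M = 0 := by simpa using hMK
    have h0 : (0 : Multiset R).esymm (2 * (d + 1)) = 0 := Multiset.zero_esymm_succ _
    rw [h0]
    refine ⟨HasBlockSum.zero (by positivity), fun N _ _ => ?_⟩
    rw [mul_zero]
    exact HasBlockSum.zero (by positivity)
  | succ K ih =>
    obtain ⟨A, B, rfl, hAc, hBc⟩ := Multiset.exists_eq_add_of_card_le M (q - 5) (K * (q - 5))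
      (by rw [Nat.succ_mul] at hMK; omega)
    have hA : ∀ x ∈ A, x ∈ L := fun x hx => hM x (Multiset.mem_add.2 (.inl hx))
    have hB : ∀ x ∈ B, x ∈ L := fun x hx => hM x (Multiset.mem_add.2 (.inr hx))
    have hBq : Multiset.card B ≤ q ^ 2 :=
      hBc.trans ((Nat.mul_le_mul (by omega : K ≤ q) (Nat.sub_le q 5)).trans (by rw [sq]))
    obtain ⟨p, hp, e⟩ := HasBlockSum.exists_esymm_add_eq q (by omega) A B hA hB (by omega) hBq d
    have hKq : (K : ℝ) ≤ q := by exact_mod_cast (by omega : K ≤ q)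
    have hd : HasBlockSum L (2 * d)
          (K.choose d * (14 / 15 : ℝ) ^ (d / 2) * q ^ d + d ^ 2 * K * q ^ (2 * d - 2))
          (B.esymm (2 * d)) ∧
        ∀ N : Multiset R, (∀ x ∈ N, x ∈ L) → Multiset.card N ≤ q - 5 →
          HasBlockSum L (2 * (d + 1))
            (K.choose d * (14 / 15 : ℝ) ^ ((d + 1) / 2) * q ^ (d + 1) +
              d ^ 2 * K * q ^ (2 * d - 1))
            (N.esymm 2 * B.esymm (2 * d)) := by
      cases d with
      | zero =>
        refine ⟨by simpa [Multiset.esymm_zero'] using HasBlockSum.one, fun N hN hNq => ?_⟩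
        simpa [Multiset.esymm_zero'] using two N hN hNq
      | succ d => exact ih (by omega) B hB hBc d
    obtain ⟨hu, hw⟩ := ih (by omega) B hB hBc d
    rw [e]
    constructor
    · refine ((hu.add (hd.2 A hA hAc)).add hp).mono ?_
      have h1 : (d : ℝ) ^ 2 * K * q ^ (2 * d - 1) ≤ d ^ 2 * q ^ (2 * d) := by
        cases d with
        | zero => simp
        | succ d =>
          rw [show 2 * (d + 1) - 1 = 2 * d + 1 by omega, show 2 * (d + 1) = 2 * d + 1 + 1 by ring,
            pow_succ _ (2 * d + 1), mul_assoc]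
          rw [mul_comm ((q : ℝ) ^ (2 * d + 1))]
          gcongr
      rw [Nat.choose_succ_succ, show 2 * (d + 1) - 2 = 2 * d by omega]
      push_cast
      linarith
    · intro N hN hNq
      have h4 := (HasBlockSum.esymm_two_mul_esymm_two N A hN hA (q - 5) hNq hAc).mul hd.1
      have h5 := (two N hN hNq).mul hp
      rw [show 4 + 2 * d = 2 * (d + 1 + 1) by ring] at h4
      rw [show 2 + 2 * (d + 1) = 2 * (d + 1 + 1) by ring] at h5
      have h6 := ((hw N hN hNq).add h4).add h5
      rw [mul_add (N.esymm 2), mul_add (N.esymm 2), ← mul_assoc (N.esymm 2)]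
      refine h6.mono ?_
      have hq5 : ((q - 5 : ℕ) : ℝ) + 5 = q := by exact_mod_cast (by omega : q - 5 + 5 = q)
      rw [hq5]
      have h1 : (14 / 15 * (q : ℝ) ^ 2) * (d ^ 2 * K * q ^ (2 * d - 2)) ≤
          d ^ 2 * q ^ (2 * d + 1) := by
        cases d with
        | zero => simp
        | succ d =>
          rw [show 2 * (d + 1) - 2 = 2 * d by omega]
          have : (0 : ℝ) ≤ (d + 1 : ℕ) ^ 2 * q ^ (2 * d) * q ^ 2 := by positivity
          calc _ = 14 / 15 * K * ((d + 1 : ℕ) ^ 2 * (q : ℝ) ^ (2 * d) * q ^ 2) := by ring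
            _ ≤ q * ((d + 1 : ℕ) ^ 2 * (q : ℝ) ^ (2 * d) * q ^ 2) := by
              gcongr
              linarith [(Nat.cast_nonneg K : (0 : ℝ) ≤ K)]
            _ = _ := by ring
      rw [Nat.choose_succ_succ, show 2 * (d + 1) - 1 = 2 * d + 1 by omega,
        show (d + 1 + 1) / 2 = d / 2 + 1 by omega]
      push_cast
      have e1 : (14 / 15 * (q : ℝ) ^ 2) * (K.choose d * (14 / 15 : ℝ) ^ (d / 2) * q ^ d) =
        K.choose d * (14 / 15 : ℝ) ^ (d / 2 + 1) * q ^ (d + 1 + 1) := by ring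
      have e2 : (q : ℝ) * ((2 * d + 1) * q ^ (2 * d)) = (2 * d + 1) * q ^ (2 * d + 1) := by ring
      rw [mul_add, e1, e2]
      linarith

end BlockSum

section Asymptotics

open Filter Topology

theorem eventually_mul_pow_sqrt_add_le_choose (d : ℕ) {c ε : ℝ} (hc : 0 < c) (hε : 0 < ε) :
    ∀ᶠ n : ℕ in atTop,
      (√(n : ℝ) + 6) ^ (2 * d) / d.factorial * c + d ^ 2 * (√(n : ℝ) + 6) ^ (2 * d - 1) ≤
        c * (1 + ε) * n.choose d := by
  have hfac : (0 : ℝ) < d.factorial := by exact_mod_cast d.factorial_pos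
  have hs : Tendsto (fun n : ℕ => √(n : ℝ)) atTop atTop :=
    Real.tendsto_sqrt_atTop.comp tendsto_natCast_atTop_atTop
  have hinv : Tendsto (fun n : ℕ => (√(n : ℝ))⁻¹) atTop (𝓝 0) := tendsto_inv_atTop_zero.comp hs
  have hone : Tendsto (fun n : ℕ => 1 + 6 * (√(n : ℝ))⁻¹) atTop (𝓝 1) := by
    simpa using (hinv.const_mul 6).const_add 1
  have h1 : Tendsto (fun n : ℕ => (1 + 6 * (√(n : ℝ))⁻¹) ^ (2 * d) / d.factorial * c +
      d ^ 2 * ((1 + 6 * (√(n : ℝ))⁻¹) ^ (2 * d - 1) * (√(n : ℝ))⁻¹)) atTop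
      (𝓝 (c / d.factorial)) := by
    have := (((hone.pow (2 * d)).div_const (d.factorial : ℝ)).mul_const c).add
      (((hone.pow (2 * d - 1)).mul hinv).const_mul ((d : ℝ) ^ 2))
    convert this using 2
    simp
    ring
  have h2 : Tendsto (fun n : ℕ => c * (1 + ε) * (n.choose d / (n : ℝ) ^ d)) atTop
      (𝓝 (c * (1 + ε) * (1 / d.factorial))) := by
    refine Tendsto.const_mul _ ?_
    have hz : ∀ᶠ n : ℕ in atTop, (n ^ d / d.factorial : ℝ) ≠ 0 := by
      filter_upwards [eventually_gt_atTop 0] with n hn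
      have : (0 : ℝ) < n := by exact_mod_cast hn
      positivity
    have := ((Asymptotics.isEquivalent_iff_tendsto_one hz).1
      (isEquivalent_choose d)).div_const (d.factorial : ℝ)
    refine this.congr fun n => ?_
    simp only [Pi.div_apply]
    field_simp
  have hlt : c / d.factorial < c * (1 + ε) * (1 / d.factorial) := by
    rw [mul_one_div]
    gcongr
    nlinarith
  filter_upwards [h1.eventually_lt h2 hlt, eventually_gt_atTop 0] with n hn hn0
  have hn0' : (0 : ℝ) < n := by exact_mod_cast hn0
  have hs0 : 0 < √(n : ℝ) := Real.sqrt_pos.2 hn0'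
  have hpow : (n : ℝ) ^ d = √(n : ℝ) ^ (2 * d) := by rw [pow_mul, Real.sq_sqrt hn0'.le]
  have e0 : 1 + 6 * (√(n : ℝ))⁻¹ = (√(n : ℝ) + 6) / √(n : ℝ) := by field_simp
  have e1 : (√(n : ℝ) + 6) ^ (2 * d) / d.factorial * c =
      (1 + 6 * (√(n : ℝ))⁻¹) ^ (2 * d) / d.factorial * c * (n : ℝ) ^ d := by
    rw [e0, hpow, div_pow]
    field_simp
  have e2 : (d : ℝ) ^ 2 * (√(n : ℝ) + 6) ^ (2 * d - 1) =
      d ^ 2 * ((1 + 6 * (√(n : ℝ))⁻¹) ^ (2 * d - 1) * (√(n : ℝ))⁻¹) * (n : ℝ) ^ d := by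
    rw [e0, hpow, div_pow]
    cases d with
    | zero => simp
    | succ d =>
      rw [show 2 * (d + 1) - 1 = 2 * d + 1 by omega, show 2 * (d + 1) = 2 * d + 1 + 1 by ring,
        pow_succ √(n : ℝ) (2 * d + 1)]
      field_simp
  rw [e1, e2, ← add_mul]
  calc _ ≤ c * (1 + ε) * (n.choose d / (n : ℝ) ^ d) * (n : ℝ) ^ d := by gcongr
    _ = _ := by field_simp

theorem HasBlockSum.exists_esymm_even_le (d : ℕ) (hd : 3 ≤ d) {ε : ℝ} (hε : 0 < ε) :
    ∃ N₀ : ℕ, ∀ {R : Type*} [CommSemiring R] (L : AddSubmonoid R) (M : Multiset R),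
      (∀ x ∈ M, x ∈ L) → N₀ ≤ Multiset.card M →
        HasBlockSum L (2 * d)
          ((14 / 15 : ℝ) ^ ((d : ℝ) / 3) * (1 + ε) * (Multiset.card M).choose d)
          (M.esymm (2 * d)) := by
  obtain ⟨N₀, hN₀⟩ := eventually_atTop.1 (eventually_mul_pow_sqrt_add_le_choose d
    (show 0 < (14 / 15 : ℝ) ^ ((d : ℝ) / 3) by positivity) hε)
  refine ⟨N₀, fun L M hM hMN => ?_⟩
  set n := Multiset.card M
  set q := Nat.sqrt n + 6
  refine ((HasBlockSum.esymm_even_of_chunks q (by omega) (q - 5) (by omega) M hM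
    (Nat.sqrt_lt.1 (by omega : Nat.sqrt n < q - 5)).le d).1.mono ?_).mono (hN₀ n hMN)
  have hq : (q : ℝ) ≤ √(n : ℝ) + 6 := by
    push_cast [q]
    gcongr
    exact Real.nat_sqrt_le_real_sqrt
  have hK : ((q - 5 : ℕ) : ℝ) ≤ √(n : ℝ) + 6 :=
    le_trans (by exact_mod_cast Nat.sub_le q 5) hq
  have hγ : (14 / 15 : ℝ) ^ (d / 2) ≤ (14 / 15 : ℝ) ^ ((d : ℝ) / 3) := by
    rw [← Real.rpow_natCast]
    refine Real.rpow_le_rpow_of_exponent_ge (by norm_num) (by norm_num) ?_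
    rw [div_le_iff₀ (by norm_num)]
    exact_mod_cast (by omega : d ≤ d / 2 * 3)
  have hs : 0 ≤ √(n : ℝ) + 6 := by positivity
  refine add_le_add ?_ ?_
  · calc _ ≤ ((q - 5 : ℕ) : ℝ) ^ d / d.factorial * (14 / 15 : ℝ) ^ ((d : ℝ) / 3) * (q : ℝ) ^ d := by
          gcongr
          exact Nat.choose_le_pow_div d (q - 5)
      _ ≤ (√(n : ℝ) + 6) ^ d / d.factorial * (14 / 15 : ℝ) ^ ((d : ℝ) / 3) *
          (√(n : ℝ) + 6) ^ d := by gcongr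
      _ = _ := by ring
  · rw [show 2 * d - 1 = 2 * d - 2 + 1 by omega, pow_succ (√(n : ℝ) + 6), mul_assoc,
      mul_comm ((√(n : ℝ) + 6) ^ (2 * d - 2))]
    gcongr

end Asymptotics

section Translation

open MvPolynomial

/-- The linear form with coefficients `c` in the variables indexed by `W`. -/
noncomputable def linForm (W : Finset ℕ) : (ℕ → ℕ) →+ MvPolynomial ℕ ℕ where
  toFun c := ∑ v ∈ W, c v • X v
  map_zero' := by simp
  map_add' c c' := by simp [add_smul, Finset.sum_add_distrib]

theorem linForm_apply (W : Finset ℕ) (c : ℕ → ℕ) :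
    linForm W c = ∑ v ∈ W, monomial (Finsupp.single v 1) (c v) := by
  refine Finset.sum_congr rfl fun v _ => ?_
  rw [X, ← map_nsmul, smul_eq_mul, mul_one]

theorem X_mem_mrange_linForm {W : Finset ℕ} {v : ℕ} (hv : v ∈ W) :
    (X v : MvPolynomial ℕ ℕ) ∈ AddMonoidHom.mrange (linForm W) := by
  refine ⟨Pi.single v 1, ?_⟩
  simp [linForm, Pi.single_apply, hv]

theorem coeff_prod_linForm_ne_zero_iff {W : Finset ℕ} {r : ℕ} (n : Fin r → ℕ → ℕ) (m : ℕ →₀ ℕ) :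
    coeff m (∏ i, linForm W (n i)) ≠ 0 ↔
      ∃ c : Fin r → ℕ, (∀ i, c i ∈ W.filter fun v => n i v ≠ 0) ∧
        ∑ i, Finsupp.single (c i) 1 = m := by
  classical
  simp only [linForm_apply, Finset.prod_univ_sum, coeff_sum, ne_eq, Finset.sum_eq_zero_iff,
    not_forall, Fintype.mem_piFinset, Finset.mem_filter]
  have : ∀ c : Fin r → ℕ, (∏ i, monomial (Finsupp.single (c i) 1) (n i (c i))) =
      monomial (∑ i, Finsupp.single (c i) 1) (∏ i, n i (c i)) := fun c => by
    simp only [monomial_sum_index, monomial_eq (a := n _ _), Finset.prod_mul_distrib, map_prod]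
    simp [X]
  simp only [this, coeff_monomial, ite_eq_right_iff, not_forall, Finset.prod_eq_zero_iff,
    Finset.mem_univ, true_and, not_exists]
  constructor
  · rintro ⟨c, hc, hm, h⟩
    exact ⟨c, fun i => ⟨hc i, h i⟩, hm⟩
  · rintro ⟨c, hc, hm⟩
    exact ⟨c, fun i => (hc i).1, hm, fun i => (hc i).2⟩

theorem sum_single_one_apply {ι : Type*} (s : Finset ι) (c : ι → ℕ) (v : ℕ) :
    (∑ i ∈ s, Finsupp.single (c i) 1 : ℕ →₀ ℕ) v = (s.filter fun i => c i = v).card := by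
  classical
  simp [Finsupp.finsetSum_apply, Finsupp.single_apply]

theorem sum_single_one_eq_iff {ι : Type*} [Fintype ι] (c : ι → ℕ) (Y : Finset ℕ) :
    ∑ i, Finsupp.single (c i) 1 = (∑ v ∈ Y, Finsupp.single v 1 : ℕ →₀ ℕ) ↔
      Function.Injective c ∧ ∀ v, v ∈ Y ↔ ∃ i, c i = v := by
  classical
  have hY : ∀ v, (∑ v ∈ Y, Finsupp.single v 1 : ℕ →₀ ℕ) v = if v ∈ Y then 1 else 0 := by
    intro v
    simp [Finsupp.finsetSum_apply, Finsupp.single_apply]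
  rw [Finsupp.ext_iff]
  simp only [hY, sum_single_one_apply]
  constructor
  · intro h
    refine ⟨fun i j hij => ?_, fun v => ?_⟩
    · have h1 : (Finset.univ.filter fun k => c k = c i).card ≤ 1 := by
        rw [h]; split_ifs <;> simp
      exact Finset.card_le_one.1 h1 i (by simp) j (by simp [hij])
    · have := h v
      by_cases hv : v ∈ Y
      · rw [if_pos hv] at this
        obtain ⟨i, hi⟩ := Finset.card_pos.1 (this ▸ one_pos)
        exact ⟨fun _ => ⟨i, (Finset.mem_filter.1 hi).2⟩, fun _ => hv⟩
      · rw [if_neg hv, Finset.card_eq_zero] at this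
        refine ⟨fun h => absurd h hv, fun ⟨i, hi⟩ => ?_⟩
        have hmem : i ∈ Finset.univ.filter fun k => c k = v := by simp [hi]
        simp [this] at hmem
  · rintro ⟨hc, h⟩ v
    split_ifs with hv
    · obtain ⟨i, hi⟩ := (h v).1 hv
      refine Finset.card_eq_one.2 ⟨i, ?_⟩
      ext j
      simp only [Finset.mem_filter, Finset.mem_univ, true_and, Finset.mem_singleton, ← hi]
      exact hc.eq_iff
    · rw [Finset.card_eq_zero, Finset.filter_eq_empty_iff]
      exact fun i _ hi => hv ((h v).2 ⟨i, hi⟩)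

theorem Block.mem_edges_iff {V : Finset ℕ} {r : ℕ} (B : Block V r) (Y : Finset ℕ) :
    Y ∈ B.edges ↔ ∃ c : Fin r → ℕ, (∀ i, c i ∈ B.parts i) ∧
      ∑ i, Finsupp.single (c i) 1 = (∑ v ∈ Y, Finsupp.single v 1 : ℕ →₀ ℕ) := by
  have disj : ∀ {i j v}, v ∈ B.parts i → v ∈ B.parts j → i = j := by
    intro _ _ _ hi hj
    by_contra h
    exact Finset.disjoint_left.1 (B.disj _ _ h) hi hj
  simp only [sum_single_one_eq_iff]
  constructor
  · rintro ⟨h1, h2⟩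
    choose c hc using fun i => Finset.card_eq_one.1 (h1 i)
    have hc' : ∀ i, c i ∈ Y ∧ c i ∈ B.parts i := fun i =>
      Finset.mem_inter.1 (hc i ▸ Finset.mem_singleton_self (c i))
    refine ⟨c, fun i => (hc' i).2, fun i j hij => disj (hc' i).2 (hij ▸ (hc' j).2), fun v => ?_⟩
    constructor
    · intro hv
      obtain ⟨i, hi⟩ := h2 v hv
      have : v ∈ Y ∩ B.parts i := Finset.mem_inter.2 ⟨hv, hi⟩
      rw [hc i, Finset.mem_singleton] at this
      exact ⟨i, this.symm⟩
    · rintro ⟨i, rfl⟩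
      exact (hc' i).1
  · rintro ⟨c, hc, -, hY⟩
    refine ⟨fun i => Finset.card_eq_one.2 ⟨c i, ?_⟩, fun v hv => ?_⟩
    · ext v
      rw [Finset.mem_inter, Finset.mem_singleton, hY]
      constructor
      · rintro ⟨⟨j, rfl⟩, hj⟩
        rw [disj (hc j) hj]
      · rintro rfl
        exact ⟨⟨i, rfl⟩, hc i⟩
    · obtain ⟨i, rfl⟩ := (hY v).1 hv
      exact ⟨i, hc i⟩

theorem ExactCover.of_fintype {ι : Type*} [Fintype ι] {V : Finset ℕ} {r : ℕ}
    {F : Set (Finset ℕ)} (B : ι → Block V r)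
    (h1 : ∀ i j, i ≠ j → Disjoint (B i).edges (B j).edges) (h2 : ⋃ i, (B i).edges = F) :
    ExactCover V r (Fintype.card ι) F :=
  ⟨B ∘ (Fintype.equivFin ι).symm,
    fun _ _ hij => h1 _ _ ((Fintype.equivFin ι).symm.injective.ne hij),
    ((Fintype.equivFin ι).symm.surjective.iUnion_comp fun i => (B i).edges).trans h2⟩

theorem sum_single_one_injective {Y Y' : Finset ℕ}
    (h : (∑ v ∈ Y, Finsupp.single v 1 : ℕ →₀ ℕ) = ∑ v ∈ Y', Finsupp.single v 1) : Y = Y' := by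
  rw [← Finset.sum_coe_sort Y, sum_single_one_eq_iff] at h
  ext v
  simp [h.2 v]

theorem coeff_sum_prod_X (F : Finset (Finset ℕ)) (m : ℕ →₀ ℕ) :
    coeff m (∑ Y ∈ F, ∏ v ∈ Y, (X v : MvPolynomial ℕ ℕ)) =
      (F.filter fun Y => ∑ v ∈ Y, Finsupp.single v 1 = m).card := by
  classical
  have : ∀ Y : Finset ℕ, ∏ v ∈ Y, (X v : MvPolynomial ℕ ℕ) =
      monomial (∑ v ∈ Y, Finsupp.single v 1) 1 := fun Y => by
    rw [monomial_sum_one]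
    rfl
  simp [this, coeff_sum, coeff_monomial]

theorem exists_exactCover_of_sum_prod_linForm {W : Finset ℕ} {r k : ℕ}
    (n : Fin k → Fin r → ℕ → ℕ) (F : Finset (Finset ℕ))
    (h : ∑ j, ∏ i, linForm W (n j i) = ∑ Y ∈ F, ∏ v ∈ Y, X v) :
    ∃ k' ≤ k, ExactCover W r k' (F : Set (Finset ℕ)) := by
  classical
  let V : Fin k → Fin r → Finset ℕ := fun j i => W.filter fun v => n j i v ≠ 0
  have hcoeff : ∀ m, ∑ j, coeff m (∏ i, linForm W (n j i)) =
      (F.filter fun Y => ∑ v ∈ Y, Finsupp.single v 1 = m).card := fun m => by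
    rw [← coeff_sum, h, coeff_sum_prod_X]
  have hle : ∀ m, ∑ j, coeff m (∏ i, linForm W (n j i)) ≤ 1 := fun m => by
    rw [hcoeff, Finset.card_le_one]
    intro Y hY Y' hY'
    exact sum_single_one_injective
      ((Finset.mem_filter.1 hY).2.trans (Finset.mem_filter.1 hY').2.symm)
  have hmem : ∀ j (c : Fin r → ℕ), (∀ i, c i ∈ V j i) →
      ∃ Y ∈ F, ∑ v ∈ Y, Finsupp.single v 1 = ∑ i, Finsupp.single (c i) 1 := by
    intro j c hc
    have h1 := (coeff_prod_linForm_ne_zero_iff (n j) _).2 ⟨c, hc, rfl⟩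
    have h2 : (∑ j, coeff (∑ i, Finsupp.single (c i) 1) (∏ i, linForm W (n j i))) ≠ 0 := fun h0 =>
      h1 (Finset.sum_eq_zero_iff.1 h0 j (Finset.mem_univ j))
    rw [hcoeff] at h2
    obtain ⟨Y, hY⟩ := Finset.card_ne_zero.1 h2
    exact ⟨Y, Finset.mem_filter.1 hY⟩
  let B : {j // ∀ i, (V j i).Nonempty} → Block W r := fun j =>
    { parts := V j
      nonempty := j.2
      subset := fun i => Finset.filter_subset _ _
      disj := by
        intro i i' hii'
        refine Finset.disjoint_left.2 fun v hv hv' => hii' ?_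
        choose c hc using j.2
        let c' : Fin r → ℕ := fun l => if l = i ∨ l = i' then v else c l
        obtain ⟨Y, -, hY⟩ := hmem j c' (fun l => by
          by_cases hl : l = i ∨ l = i'
          · simp only [c', if_pos hl]
            rcases hl with rfl | rfl <;> assumption
          · simp only [c', if_neg hl]
            exact hc l)
        exact ((sum_single_one_eq_iff c' Y).1 hY.symm).1 (by simp [c']) }
  have hB : ∀ j Y, Y ∈ (B j).edges ↔
      coeff (∑ v ∈ Y, Finsupp.single v 1) (∏ i, linForm W (n j i)) ≠ 0 := fun j Y => by
    rw [Block.mem_edges_iff, coeff_prod_linForm_ne_zero_iff]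
  refine ⟨_, ?_, ExactCover.of_fintype B ?_ ?_⟩
  · exact (Fintype.card_subtype_le _).trans (by simp)
  · intro j j' hjj'
    refine Set.disjoint_left.2 fun Y hY hY' => ?_
    rw [hB] at hY hY'
    have h1 := (Finset.sum_le_sum_of_subset (f := fun j =>
      coeff (∑ v ∈ Y, Finsupp.single v 1) (∏ i, linForm W (n j i)))
      (Finset.subset_univ {j.1, j'.1})).trans (hle (∑ v ∈ Y, Finsupp.single v 1))
    rw [Finset.sum_pair (fun h => hjj' (Subtype.ext h))] at h1
    omega
  · ext Y
    simp only [Set.mem_iUnion, hB, Finset.mem_coe]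
    constructor
    · rintro ⟨j, hj⟩
      obtain ⟨c, hc, e⟩ := (coeff_prod_linForm_ne_zero_iff _ _).1 hj
      obtain ⟨Y', hY', e'⟩ := hmem j c hc
      rwa [← sum_single_one_injective (e'.trans e)]
    · intro hY
      have h1 : (∑ j, coeff (∑ v ∈ Y, Finsupp.single v 1) (∏ i, linForm W (n j i))) ≠ 0 := by
        rw [hcoeff]
        exact Finset.card_ne_zero.2 ⟨Y, by simp [hY]⟩
      obtain ⟨j, -, hj⟩ := Finset.exists_ne_zero_of_sum_ne_zero h1
      obtain ⟨c, hc, -⟩ := (coeff_prod_linForm_ne_zero_iff _ _).1 hj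
      exact ⟨⟨j, fun i => ⟨c i, hc i⟩⟩, hj⟩

theorem Multiset.exists_eq_map_fin {α : Type*} (s : Multiset α) {k : ℕ}
    (hk : Multiset.card s = k) : ∃ g : Fin k → α, s = Finset.univ.val.map g := by
  obtain ⟨l, rfl⟩ : ∃ l : List α, (l : Multiset α) = s := Quotient.exists_rep s
  obtain rfl : l.length = k := hk
  exact ⟨l.get, by rw [Fin.univ_val_map, List.ofFn_get]⟩

theorem HasBlockSum.exists_exactCover {W : Finset ℕ} {r : ℕ} {c : ℝ} (F : Finset (Finset ℕ))
    (h : HasBlockSum (AddMonoidHom.mrange (linForm W)) r c (∑ Y ∈ F, ∏ v ∈ Y, X v)) :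
    ∃ k : ℕ, ExactCover W r k (F : Set (Finset ℕ)) ∧ (k : ℝ) ≤ c := by
  obtain ⟨s, hs, ht, e⟩ := h
  obtain ⟨g, hg⟩ := s.exists_eq_map_fin rfl
  have hgs : ∀ j, g j ∈ s := fun j => by
    rw [hg]
    exact Multiset.mem_map_of_mem g (Finset.mem_univ j)
  choose l hl using fun j => (g j).exists_eq_map_fin (ht _ (hgs j)).1
  have hlL : ∀ j i, l j i ∈ AddMonoidHom.mrange (linForm W) := fun j i => by
    refine (ht _ (hgs j)).2 _ ?_
    rw [hl]
    exact Multiset.mem_map_of_mem (l j) (Finset.mem_univ i)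
  choose n hn using hlL
  have e' : ∑ j, ∏ i, linForm W (n j i) = ∑ Y ∈ F, ∏ v ∈ Y, X v := by
    rw [e]
    simp only [hn]
    conv_rhs => rw [hg, Multiset.map_map]
    refine Finset.sum_congr rfl fun j _ => ?_
    simp only [Function.comp_apply]
    rw [hl j]
    rfl
  obtain ⟨k, hk, h⟩ := exists_exactCover_of_sum_prod_linForm n F e'
  exact ⟨k, h, le_trans (by exact_mod_cast hk) hs⟩

theorem esymm_mul_esymm_eq_sum {S T : Finset ℕ} (hST : Disjoint S T) (a b : ℕ) :
    (S.val.map X).esymm a * (T.val.map X).esymm b =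
      ∑ Y ∈ (S ∪ T).powerset.filter fun Y => (Y ∩ S).card = a ∧ (Y ∩ T).card = b,
        ∏ v ∈ Y, (X v : MvPolynomial ℕ ℕ) := by
  rw [Finset.esymm_map_val, Finset.esymm_map_val, Finset.sum_mul_sum, ← Finset.sum_product']
  have hS : ∀ {A B : Finset ℕ}, A ⊆ S → B ⊆ T → (A ∪ B) ∩ S = A := by
    intro A B hA hB
    rw [Finset.union_inter_distrib_right, Finset.inter_eq_left.2 hA,
      Finset.disjoint_iff_inter_eq_empty.1 (hST.symm.mono_left hB), Finset.union_empty]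
  have hT : ∀ {A B : Finset ℕ}, A ⊆ S → B ⊆ T → (A ∪ B) ∩ T = B := by
    intro A B hA hB
    rw [Finset.union_inter_distrib_right, Finset.inter_eq_left.2 hB,
      Finset.disjoint_iff_inter_eq_empty.1 (hST.mono_left hA), Finset.empty_union]
  refine Finset.sum_nbij' (fun AB => AB.1 ∪ AB.2) (fun Y => (Y ∩ S, Y ∩ T)) ?_ ?_ ?_ ?_ ?_
  · rintro ⟨A, B⟩ h
    simp only [Finset.mem_product, Finset.mem_powersetCard] at h
    obtain ⟨⟨hA, rfl⟩, hB, rfl⟩ := h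
    rw [Finset.mem_filter, Finset.mem_powerset]
    exact ⟨Finset.union_subset_union hA hB, by rw [hS hA hB], by rw [hT hA hB]⟩
  · intro Y h
    simp only [Finset.mem_filter] at h
    simp [h.2.1, h.2.2]
  · rintro ⟨A, B⟩ h
    simp only [Finset.mem_product, Finset.mem_powersetCard] at h
    simp [hS h.1.1 h.2.1, hT h.1.1 h.2.1]
  · intro Y h
    simp only [Finset.mem_filter, Finset.mem_powerset] at h
    simp [← Finset.inter_union_distrib_left, h.1]
  · rintro ⟨A, B⟩ h
    simp only [Finset.mem_product, Finset.mem_powersetCard] at h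
    rw [Finset.prod_union (hST.mono h.1.1 h.2.1)]

end Translation

theorem cover_mixed_family_asymptotic (a b : ℕ) (hae : Even a) (hbe : Even b)
    (ha : 6 ≤ a) (hb : 6 ≤ b) (ε : ℝ) (hε : 0 < ε) :
    ∃ N : ℕ, ∀ S T : Finset ℕ, Disjoint S T → N ≤ S.card → N ≤ T.card →
      ∃ k : ℕ,
        ExactCover (S ∪ T) (a + b + 1) k
          {X | X ⊆ S ∪ T ∧
            (((X ∩ S).card = a ∧ (X ∩ T).card = b + 1) ∨
             ((X ∩ S).card = a + 1 ∧ (X ∩ T).card = b))} ∧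
        (k : ℝ) ≤ (((14 : ℝ) / 15) ^ ((b : ℝ) / 6) + ((14 : ℝ) / 15) ^ ((a : ℝ) / 6))
          * (1 + ε) * (S.card.choose (a / 2)) * (T.card.choose (b / 2)) := by
  obtain ⟨a, rfl⟩ := even_iff_exists_two_mul.1 hae
  obtain ⟨b, rfl⟩ := even_iff_exists_two_mul.1 hbe
  obtain ⟨N₁, h₁⟩ := HasBlockSum.exists_esymm_even_le a (by omega) hε
  obtain ⟨N₂, h₂⟩ := HasBlockSum.exists_esymm_even_le b (by omega) hε
  refine ⟨max N₁ N₂, fun S T hST hS hT => ?_⟩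
  have hSL : ∀ x ∈ S.val.map (MvPolynomial.X (R := ℕ)),
      x ∈ AddMonoidHom.mrange (linForm (S ∪ T)) := by
    intro x hx
    obtain ⟨v, hv, rfl⟩ := Multiset.mem_map.1 hx
    exact X_mem_mrange_linForm (Finset.mem_union_left T hv)
  have hTL : ∀ x ∈ T.val.map (MvPolynomial.X (R := ℕ)),
      x ∈ AddMonoidHom.mrange (linForm (S ∪ T)) := by
    intro x hx
    obtain ⟨v, hv, rfl⟩ := Multiset.mem_map.1 hx
    exact X_mem_mrange_linForm (Finset.mem_union_right S hv)
  have hS₁ := h₁ _ _ hSL (by simpa using le_of_max_le_left hS)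
  have hT₁ := h₂ _ _ hTL (by simpa using le_of_max_le_right hT)
  have hmain := (hS₁.mul (HasBlockSum.esymm_odd _ hTL b)).add
    ((show 2 * a + 1 + 2 * b = 2 * a + (2 * b + 1) by ring) ▸
      (HasBlockSum.esymm_odd _ hSL a).mul hT₁)
  rw [esymm_mul_esymm_eq_sum hST, esymm_mul_esymm_eq_sum hST, ← Finset.sum_union] at hmain
  · obtain ⟨k, hk, hkc⟩ := hmain.exists_exactCover
    refine ⟨k, ?_, hkc.trans (le_of_eq ?_)⟩
    · rw [← add_assoc] at hk
      convert hk using 1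
      ext Y
      simp only [Set.mem_ofPred_eq, Finset.coe_union, Finset.coe_filter, Finset.mem_powerset,
        Set.mem_union]
      tauto
    · rw [show 2 * a / 2 = a by omega, show 2 * b / 2 = b by omega,
        show ((2 * a : ℕ) : ℝ) / 6 = a / 3 by push_cast; ring,
        show ((2 * b : ℕ) : ℝ) / 6 = b / 3 by push_cast; ring]
      simp only [Multiset.card_map, Finset.card_val]
      ring
  · refine Finset.disjoint_left.2 fun Y hY hY' => ?_
    simp only [Finset.mem_filter] at hY hY'
    omega
end
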